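/- arXiv:2303.03980 — 2 statements merged into one kernel-verified Lean document; each statement's English description precedes it below -/
import Mathlib

section
/- Let V be a leafless unrooted directed tree and μ=(μ_v)_{v∈V} a weight of nonzero scalars. Suppose the unweighted backward shift B is an operator on ℓ^1(V,μ). Then B is chaotic on ℓ^1(V,μ) if and only if for every v∈V: (1) there exists a branch (v,v_1,v_2,…) starting from v such that ∑_{n=1}^∞|μ_{v_n}|<∞; and (2) for every ε>0 there is some N≥1 such that either ∑_{n=1}^∞|μ_{par^{nN}(v)}|<ε, or there is a branch (v_0,v_1,v_2,…) starting from v_0:=par^N(v), with v_N≠v, such that ∑_{n=1}^∞|μ_{v_{nN}}|<ε. -/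
open scoped ENNReal NNReal Topology Classical
open Filter

namespace PaperTree

/-! ### Directed trees -/

variable {V : Type*}

/-- Iterated parent map of a directed tree given by a parent function. -/
def parIter (par : V → Option V) : ℕ → V → Option V
  | 0, v => some v
  | n + 1, v => (par v).bind (parIter par n)

/-- `par` is the parent function of a (countable, connected, acyclic) directed tree on `V`,
in which every vertex has at most one parent and at most one vertex (the root) has none. -/
structure IsDirectedTree (par : V → Option V) : Prop where
  countable : Countable V
  acyclic : ∀ (v : V) (n : ℕ), 0 < n → parIter par n v ≠ some v
  connected : ∀ u v : V, ∃ (m n : ℕ) (w : V), parIter par m u = some w ∧ parIter par n v = some w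
  root_unique : ∀ u v : V, par u = none → par v = none → u = v

/-- The set of children of `v`. -/
def children (par : V → Option V) (v : V) : Set V := {u : V | par u = some v}

/-- The set of descendants of `v` (including `v`); the rooted subtree `V(v)`. -/
def descendants (par : V → Option V) (v : V) : Set V := {u : V | ∃ n : ℕ, parIter par n u = some v}

def IsLeafV (par : V → Option V) (v : V) : Prop := children par v = ∅

def Leafless (par : V → Option V) : Prop := ∀ v : V, children par v ≠ ∅

def IsRoot (par : V → Option V) (v : V) : Prop := par v = none

def Rooted (par : V → Option V) : Prop := ∃ v : V, IsRoot par v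

def Unrooted (par : V → Option V) : Prop := ∀ v : V, par v ≠ none

/-- The tree has a free left end: some vertex all of whose (proper) ancestors
have exactly one child. -/
def HasFreeLeftEnd (par : V → Option V) : Prop :=
  ∃ v : V, ∀ n : ℕ, 1 ≤ n → ∀ w : V, parIter par n v = some w → ∃! u : V, u ∈ children par w

/-- The tree has finite length (all branches have uniformly bounded length). -/
def FiniteLength (par : V → Option V) : Prop := ∃ m : ℕ, ∀ u : V, parIter par (m + 1) u = none

/-- Product of the weights along the upward path of length `n` ending at `u`;
for `u ∈ Chi^n(v)` this is `λ(v → u)`, and `pathProd par lam n v = λ(par^n(v) → v)`. -/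
def pathProd {𝕜 : Type*} [Monoid 𝕜] (par : V → Option V) (lam : V → 𝕜) : ℕ → V → 𝕜
  | 0, _ => 1
  | n + 1, u => lam u * ((par u).elim 1 (pathProd par lam n))

/-- A (finite or infinite, maximal) branch starting at `v`, encoded with `Option`. -/
def IsOptBranch (par : V → Option V) (v : V) (b : ℕ → Option V) : Prop :=
  b 0 = some v ∧
  (∀ (k : ℕ) (w : V), b k = some w →
      (children par w = ∅ ∧ b (k + 1) = none) ∨ ∃ u ∈ children par w, b (k + 1) = some u) ∧
  ∀ k : ℕ, b k = none → b (k + 1) = none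

/-- An infinite branch starting at `v` (adequate for leafless trees). -/
def IsBranch (par : V → Option V) (v : V) (b : ℕ → V) : Prop :=
  b 0 = v ∧ ∀ k : ℕ, b (k + 1) ∈ children par (b k)

/-- The `[0,∞]`-valued absolute weight associated with a scalar weight. -/
noncomputable def nw {𝕜 : Type*} [RCLike 𝕜] (μ : V → 𝕜) : V → ℝ≥0∞ := fun v => (‖μ v‖₊ : ℝ≥0∞)

/-! ### Linear dynamics -/

section Dynamics

variable {𝕜 : Type*} [RCLike 𝕜] {X : Type*} [AddCommGroup X] [Module 𝕜 X] [TopologicalSpace X]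

/-- An operator is hypercyclic if some vector has dense orbit. -/
def Hypercyclic (T : X →L[𝕜] X) : Prop :=
  ∃ x : X, Dense (Set.range fun n : ℕ => (T ^ n) x)

/-- A periodic point of the operator `T`. -/
def IsPeriodicPoint (T : X →L[𝕜] X) (x : X) : Prop :=
  ∃ N : ℕ, 1 ≤ N ∧ (T ^ N) x = x

/-- An operator is chaotic if it is hypercyclic and has a dense set of periodic points. -/
def ChaoticOp (T : X →L[𝕜] X) : Prop :=
  Hypercyclic T ∧ Dense {x : X | IsPeriodicPoint T x}

/-- Topological mixing. -/
def MixingOp (T : X →L[𝕜] X) : Prop :=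
  ∀ U₁ U₂ : Set X, IsOpen U₁ → IsOpen U₂ → U₁.Nonempty → U₂.Nonempty →
    ∃ m : ℕ, ∀ n : ℕ, m ≤ n → ((⇑(T ^ n)) '' U₁ ∩ U₂).Nonempty

/-- Weak mixing: `T ⊕ T` is hypercyclic on `X × X`. -/
def WeaklyMixingOp (T : X →L[𝕜] X) : Prop :=
  Hypercyclic (T.prodMap T)

variable {V : Type*}

/-- `T` is (a representation via the coefficient embedding `ι` of) the weighted backward
shift `B_λ` as an operator on `X`: for every `x ∈ X` and every vertex `v` the defining
series converges unconditionally to the `v`-th coefficient of `T x`. -/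
def IsShiftRep (par : V → Option V) (lam : V → 𝕜) (ι : X →ₗ[𝕜] V → 𝕜) (T : X →L[𝕜] X) : Prop :=
  ∀ (x : X) (v : V), HasSum (fun u : ↥(children par v) => lam u.1 * ι x u.1) (ι (T x) v)

end Dynamics

/-! ### Concrete sequence spaces `ℓ^p(V, μ)` and `c₀(V, μ)`, up to isometry -/

section SpaceRep

variable {𝕜 : Type*} [RCLike 𝕜] {V : Type*} {X : Type*} [NormedAddCommGroup X] [NormedSpace 𝕜 X]

/-- `X` is (an isometric copy of) the weighted space `ℓ^p(V, μ)`, the identification being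
given by the coefficient embedding `ι`. -/
def IsLpSpaceRep (ι : X →ₗ[𝕜] V → 𝕜) (μ : V → 𝕜) (p : ℝ) : Prop :=
  Function.Injective ι ∧
  (∀ f : V → 𝕜, (∑' v : V, (‖f v * μ v‖₊ : ℝ≥0∞) ^ p) < ⊤ ↔ f ∈ Set.range ι) ∧
  ∀ x : X, (‖x‖₊ : ℝ≥0∞) = (∑' v : V, (‖ι x v * μ v‖₊ : ℝ≥0∞) ^ p) ^ (1 / p)

/-- `X` is (an isometric copy of) the weighted space `c₀(V, μ)`. -/
def IsC0SpaceRep (ι : X →ₗ[𝕜] V → 𝕜) (μ : V → 𝕜) : Prop :=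
  Function.Injective ι ∧
  (∀ f : V → 𝕜, (∀ ε : ℝ, 0 < ε → {v : V | ε ≤ ‖f v * μ v‖}.Finite) ↔ f ∈ Set.range ι) ∧
  ∀ x : X, (‖x‖₊ : ℝ≥0∞) = ⨆ v : V, (‖ι x v * μ v‖₊ : ℝ≥0∞)

end SpaceRep

/-!
The tree is unrooted, so the parent function is a self-map `p` of `V` and `B` is the operator `T`
with `T (e v) = e (p v)`.

Suppose (1) and (2) hold. Sampling the branch in (1) at multiples of `M` gives a small `g` with
`T ^ M g = e v + g`. Condition (2) gives a small `f` with `T ^ M (e v + f) = f`: either the sum of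
the sampled ancestors of `v`, or minus the sum of the sampled branch. Hence `e v + (g + f)` is
periodic, so the periodic points are dense. Moreover `e v` has small preimages under the powers of
`T` and is close to vectors with orbits tending to zero, so `T` is transitive.

Conversely, let `F ≥ 0` be a function on `V` which is dominated by its sums over children. Among the
children of a vertex there is one for which the ratio of the cost `∑ F w * |μ w|` over the subtree
to the value of `F` is at most the corresponding ratio for the whole family. Following such children
gives a branch whose total weight is at most the cost divided by the value of `F` at its start. For
(1), let `F` be the sum of the absolute coefficients over the orbit of a periodic vector. For (2),
take `F = |a|`, where `a` are the coefficients of a vector close to `e v` and fixed by `T ^ N`, so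
that `a u` is the sum of the values of `a` over the vertices `N` generations below `u`, and the cost
away from `v` is small. Either at least half of `a v` persists at all the sampled ancestors of `v`,
whose weights then have a small sum, or half of `a v` is cancelled by other vertices below the same
ancestor, and one of them starts a cheap branch.
-/

open Function

section Orbits

variable {p : V → V}

theorem iterate_injective_of_periodicPts_eq_empty (hp : periodicPts p = ∅) (v : V) :
    Injective fun n ↦ p^[n] v := by
  refine .of_lt_imp_ne fun i j hij hvij ↦ ?_
  have hperiodic : p^[i] v ∈ periodicPts p := by
    refine mk_mem_periodicPts (Nat.sub_pos_of_lt hij) ?_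
    rw [IsPeriodicPt, IsFixedPt, ← iterate_add_apply, Nat.sub_add_cancel hij.le]
    exact hvij.symm
  simp [hp] at hperiodic

theorem periodicPts_iterate_eq_empty (hp : periodicPts p = ∅) {N : ℕ} (hN : 0 < N) :
    periodicPts p^[N] = ∅ := by
  refine Set.eq_empty_of_forall_notMem fun v ⟨n, hn, hv⟩ ↦ ?_
  rw [IsPeriodicPt, ← iterate_mul] at hv
  exact (hp ▸ mk_mem_periodicPts (Nat.mul_pos hN hn) hv : v ∈ (∅ : Set V))

/-- `b` runs backwards along `p`. When `p` is the parent map of a tree, these are the infinite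
branches starting at `b 0`. -/
def IsBackwardOrbit (p : V → V) (b : ℕ → V) : Prop := ∀ n, p (b (n + 1)) = b n

namespace IsBackwardOrbit

variable {b : ℕ → V}

theorem iterate_apply (hb : IsBackwardOrbit p b) (j n : ℕ) : p^[j] (b (n + j)) = b n := by
  induction j with
  | zero => rfl
  | succ j ih => rw [iterate_succ_apply, ← add_assoc, hb, ih]

theorem iterate_apply_self (hb : IsBackwardOrbit p b) (n : ℕ) : p^[n] (b n) = b 0 := by
  simpa using hb.iterate_apply n 0

theorem sample (hb : IsBackwardOrbit p b) (N : ℕ) :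
    IsBackwardOrbit p^[N] fun n ↦ b (n * N) := fun n ↦ by
  simp only [add_one_mul, hb.iterate_apply]

theorem exists_interpolation {N : ℕ} (hN : 0 < N) {g : ℕ → V} (hg : IsBackwardOrbit p^[N] g) :
    ∃ b, IsBackwardOrbit p b ∧ ∀ n, b (n * N) = g n := by
  have hle (n : ℕ) : n ≤ n * N := Nat.le_mul_of_pos_right n hN
  refine ⟨fun n ↦ p^[n * N - n] (g n), fun n ↦ ?_, fun n ↦ ?_⟩
  · have hexp : (n + 1) * N - (n + 1) + 1 = (n * N - n) + N := by
      have := hle n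
      grind
    rw [← iterate_succ_apply' p, Nat.succ_eq_add_one, hexp, iterate_add_apply, hg]
  · have hiter := hg.iterate_apply (n * N - n) n
    rwa [← iterate_mul, Nat.add_sub_cancel' (hle n), mul_comm, Nat.sub_mul] at hiter

end IsBackwardOrbit

/-- Condition (1) of the characterization at the vertex `v`: some branch starting at `v` has
finite total weight, where `m` is the absolute weight. -/
def HasSummableBranch (p : V → V) (m : V → ℝ≥0∞) (v : V) : Prop :=
  ∃ b, b 0 = v ∧ IsBackwardOrbit p b ∧ ∑' n, m (b (n + 1)) < ∞

theorem HasSummableBranch.exists_tsum_lt {m : V → ℝ≥0∞} {v : V} (h : HasSummableBranch p m v)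
    {N : ℕ} (hN : 1 ≤ N) {ε : ℝ≥0∞} (hε : 0 < ε) :
    ∃ k, 1 ≤ k ∧ ∃ b, b 0 = v ∧ IsBackwardOrbit p b ∧ ∑' n, m (b ((n + 1) * (k * N))) < ε := by
  obtain ⟨b, hbv, hb, hfin⟩ := h
  have htail := ENNReal.tendsto_sum_nat_add (fun n ↦ m (b (n + 1))) hfin.ne
  obtain ⟨k, hk⟩ := (htail.eventually (gt_mem_nhds hε)).exists
  refine ⟨k + 1, k.succ_pos, b, hbv, hb, lt_of_le_of_lt ?_ hk⟩
  obtain ⟨r, hr⟩ : ∃ r, (k + 1) * N = r + k + 1 := by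
    obtain ⟨r, hr⟩ := Nat.exists_eq_add_of_le (Nat.le_mul_of_pos_right (k + 1) hN)
    exact ⟨r, by omega⟩
  have hinj : Injective fun n ↦ n * ((k + 1) * N) + r := fun i j hij ↦
    Nat.eq_of_mul_eq_mul_right (Nat.mul_pos k.succ_pos hN) (Nat.add_right_cancel hij)
  calc ∑' n, m (b ((n + 1) * ((k + 1) * N)))
      = ∑' n, m (b (n * ((k + 1) * N) + r + k + 1)) := by
        refine tsum_congr fun n ↦ ?_
        rw [add_one_mul n, add_assoc, add_assoc, ← add_assoc r, ← hr]
    _ ≤ ∑' n, m (b (n + k + 1)) :=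
        ENNReal.tsum_comp_le_tsum_of_injective hinj fun n ↦ m (b (n + k + 1))

/-- Condition (2) of the characterization at the vertex `v`: for some step size `N`, sampling at
the multiples of `N`, either the ancestors of `v` or a branch which leaves the `N`-th ancestor of
`v` while avoiding `v` have total weight below `ε`. Such vertices carry a small vector `f` for which
`e v + f` is mapped to `f` by every power of `T ^ N`. -/
def HasSmallCompensation (p : V → V) (m : V → ℝ≥0∞) (v : V) (ε : ℝ≥0∞) : Prop :=
  ∃ N, 1 ≤ N ∧ (∑' n : ℕ, m (p^[(n + 1) * N] v) < ε ∨
    ∃ b, b 0 = p^[N] v ∧ IsBackwardOrbit p b ∧ b N ≠ v ∧ ∑' n, m (b ((n + 1) * N)) < ε)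

/-- The vertex `u` together with its descendants under the parent map `p`. -/
def subtree (p : V → V) (u : V) : Set V := {w | ∃ n, p^[n] w = u}

theorem self_mem_subtree (u : V) : u ∈ subtree p u := ⟨0, rfl⟩

theorem subtree_subset_subtree_apply (u : V) : subtree p u ⊆ subtree p (p u) := by
  rintro w ⟨n, rfl⟩
  exact ⟨n + 1, iterate_succ_apply' p n w⟩

theorem apply_notMem_subtree (hp : periodicPts p = ∅) (u : V) : p u ∉ subtree p u := by
  rintro ⟨n, hn⟩
  rw [← iterate_succ_apply] at hn
  exact (hp ▸ mk_mem_periodicPts n.succ_pos hn : u ∈ (∅ : Set V))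

theorem pairwiseDisjoint_subtree (hp : periodicPts p = ∅) (u : V) :
    (p ⁻¹' {u}).PairwiseDisjoint (subtree p) := by
  intro w hw w' hw' hne
  refine Set.disjoint_left.2 ?_
  rintro z ⟨i, rfl⟩ ⟨j, rfl⟩
  simp only [Set.mem_preimage, ← iterate_succ_apply' p, Set.mem_singleton_iff] at hw hw'
  have hij := iterate_injective_of_periodicPts_eq_empty hp z (hw.trans hw'.symm)
  exact hne (by rw [Nat.succ_injective hij])

theorem add_tsum_tsum_subtree_le (hp : periodicPts p = ∅) (f : V → ℝ≥0∞) (u : V) :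
    f u + ∑' w : p ⁻¹' {u}, ∑' z : subtree p w, f z ≤ ∑' z : subtree p u, f z := by
  have hdisj : Disjoint {u} (⋃ w ∈ p ⁻¹' {u}, subtree p w) := by
    simp only [Set.disjoint_singleton_left, Set.mem_iUnion₂, not_exists]
    rintro w rfl
    exact apply_notMem_subtree hp w
  have hsub : {u} ∪ ⋃ w ∈ p ⁻¹' {u}, subtree p w ⊆ subtree p u := by
    refine Set.union_subset (Set.singleton_subset_iff.2 (self_mem_subtree u))
      (Set.iUnion₂_subset ?_)
    rintro w rfl
    exact subtree_subset_subtree_apply w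
  calc f u + ∑' w : p ⁻¹' {u}, ∑' z : subtree p w, f z
      = ∑' z : ↥({u} ∪ ⋃ w ∈ p ⁻¹' {u}, subtree p w), f z := by
        rw [ENNReal.summable.tsum_union_disjoint hdisj ENNReal.summable,
          ENNReal.tsum_biUnion' (pairwiseDisjoint_subtree hp u), tsum_singleton]
    _ ≤ ∑' z : subtree p u, f z := ENNReal.tsum_mono_subtype f hsub

theorem tsum_siblings_tsum_subtree_le (hp : periodicPts p = ∅) (f : V → ℝ≥0∞) (v : V) :
    ∑' w : ↥(p ⁻¹' {p v} \ {v}), ∑' z : subtree p w, f z ≤ ∑' z : ↥({v}ᶜ : Set V), f z := by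
  have hdisj := pairwiseDisjoint_subtree hp (p v)
  rw [← ENNReal.tsum_biUnion' (hdisj.subset Set.sdiff_subset)]
  refine ENNReal.tsum_mono_subtype f (Set.iUnion₂_subset fun w hw ↦ ?_)
  have hvw : Disjoint (subtree p w) (subtree p v) := hdisj hw.1 rfl hw.2
  exact Set.subset_compl_singleton_iff.2 (hvw.notMem_of_mem_right (self_mem_subtree v))

end Orbits

section Flows

variable {p : V → V}

theorem exists_div_le_tsum_div {ι : Type*} {D F : ι → ℝ≥0∞} {s : ℝ≥0∞} (hs : s ≠ 0) (hs' : s ≠ ∞)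
    (hsF : s ≤ ∑' i, F i) (hD : ∑' i, D i ≠ ∞) : ∃ i, F i ≠ 0 ∧ D i / F i ≤ (∑' i, D i) / s := by
  by_contra! hlt
  set r := (∑' i, D i) / s
  have hle (i : ι) : r * F i ≤ D i := by
    rcases eq_or_ne (F i) 0 with hi | hi
    · simp [hi]
    · exact (ENNReal.mul_lt_of_lt_div (hlt i hi)).le
  obtain ⟨i, hi⟩ : ∃ i, F i ≠ 0 := by
    by_contra! hF
    simp only [hF, tsum_zero, nonpos_iff_eq_zero] at hsF
    exact hs hsF
  have hrF : ∑' i, r * F i < ∑' i, D i :=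
    ENNReal.tsum_lt_tsum (ne_top_of_le_ne_top hD (ENNReal.tsum_le_tsum hle)) hle
      (ENNReal.mul_lt_of_lt_div (hlt i hi))
  refine hrF.not_ge ?_
  calc ∑' i, D i = r * s := (ENNReal.div_mul_cancel hs hs').symm
    _ ≤ r * ∑' i, F i := by gcongr
    _ = ∑' i, r * F i := ENNReal.tsum_mul_left.symm

theorem exists_isBackwardOrbit_tsum_le {F D m : V → ℝ≥0∞} (hF : ∀ u, F u ≠ ∞)
    (hFle : ∀ u, F u ≤ ∑' w : p ⁻¹' {u}, F w)
    (hD : ∀ u, F u * m u + ∑' w : p ⁻¹' {u}, D w ≤ D u) {v : V} (hv : F v ≠ 0) (hDv : D v ≠ ∞) :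
    ∃ b, b 0 = v ∧ IsBackwardOrbit p b ∧ ∑' n, m (b n) ≤ D v / F v := by
  have hstep (u : {u // F u ≠ 0 ∧ D u ≠ ∞}) :
      ∃ w : {w // F w ≠ 0 ∧ D w ≠ ∞}, p w = u ∧ m u + D w / F w ≤ D u / F u := by
    obtain ⟨u, hu, hDu⟩ := u
    have hDfin : ∑' w : p ⁻¹' {u}, D w ≠ ∞ := ne_top_of_le_ne_top hDu (le_add_self.trans (hD u))
    obtain ⟨w, hw, hwle⟩ := exists_div_le_tsum_div hu (hF u) (hFle u) hDfin
    refine ⟨⟨w, hw, ENNReal.ne_top_of_tsum_ne_top hDfin w⟩, w.2, ?_⟩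
    calc m u + D w / F w ≤ m u + (∑' w : p ⁻¹' {u}, D w) / F u := by gcongr
      _ = (F u * m u + ∑' w : p ⁻¹' {u}, D w) / F u := by
        rw [ENNReal.add_div, mul_comm, ENNReal.mul_div_cancel_right hu (hF u)]
      _ ≤ D u / F u := by gcongr; exact hD u
  choose next hnext hle using hstep
  let b (n : ℕ) := next^[n] ⟨v, hv, hDv⟩
  have hb (n : ℕ) : b (n + 1) = next (b n) := iterate_succ_apply' next n _
  refine ⟨fun n ↦ b n, rfl, fun n ↦ by simp only [hb, hnext],
    ENNReal.tsum_le_of_sum_range_le fun K ↦ ?_⟩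
  have htelescope :
      ∑ n ∈ Finset.range K, m (b n) + D (b K) / F (b K) ≤ D v / F v := by
    induction K with
    | zero => simp [b]
    | succ K ih =>
      rw [Finset.sum_range_succ, add_assoc, hb]
      exact (add_le_add_right (hle (b K)) _).trans ih
  exact le_self_add.trans htelescope

theorem exists_isBackwardOrbit_tsum_le_subtree (hp : periodicPts p = ∅) {F m : V → ℝ≥0∞}
    (hF : ∀ u, F u ≠ ∞) (hFle : ∀ u, F u ≤ ∑' w : p ⁻¹' {u}, F w) {v : V} (hv : F v ≠ 0)
    (hfin : ∑' w : subtree p v, F w * m w ≠ ∞) :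
    ∃ b, b 0 = v ∧ IsBackwardOrbit p b ∧ ∑' n, m (b n) ≤ (∑' w : subtree p v, F w * m w) / F v :=
  exists_isBackwardOrbit_tsum_le (D := fun u ↦ ∑' w : subtree p u, F w * m w) hF hFle
    (add_tsum_tsum_subtree_le hp fun w ↦ F w * m w) hv hfin

theorem hasSummableBranch_of_le_tsum_fiber (hp : periodicPts p = ∅) {F m : V → ℝ≥0∞}
    (hF : ∀ u, F u ≠ ∞) (hFle : ∀ u, F u ≤ ∑' w : p ⁻¹' {u}, F w) {v : V} (hv : F v ≠ 0)
    (hfin : ∑' w, F w * m w ≠ ∞) : HasSummableBranch p m v := by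
  have hsubtree : ∑' w : subtree p v, F w * m w ≠ ∞ :=
    ne_top_of_le_ne_top hfin
      (ENNReal.tsum_comp_le_tsum_of_injective Subtype.val_injective fun w ↦ F w * m w)
  obtain ⟨b, hbv, hb, hle⟩ := exists_isBackwardOrbit_tsum_le_subtree hp hF hFle hv hsubtree
  refine ⟨b, hbv, hb, ?_⟩
  calc ∑' n, m (b (n + 1)) ≤ ∑' n, m (b n) :=
        ENNReal.tsum_comp_le_tsum_of_injective (add_left_injective 1) fun n ↦ m (b n)
    _ ≤ (∑' w : subtree p v, F w * m w) / F v := hle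
    _ < ∞ := ENNReal.div_lt_top hsubtree hv

/-- The value of `a` at each vertex is the unconditional sum of its values at the children. For
`p^[N]` in place of `p`, these are the coefficient families of the fixed vectors of the `N`-th
power of the backward shift. -/
def IsFlow {E : Type*} [AddCommMonoid E] [TopologicalSpace E] (p : V → V) (a : V → E) : Prop :=
  ∀ u, HasSum (fun w : p ⁻¹' {u} ↦ a w) (a u)

namespace IsFlow

variable {E : Type*} [NormedAddCommGroup E] {a : V → E}

theorem enorm_le_tsum_fiber (ha : IsFlow p a) (u : V) : ‖a u‖ₑ ≤ ∑' w : p ⁻¹' {u}, ‖a w‖ₑ :=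
  (ha u).tsum_eq ▸ enorm_tsum_le_tsum_enorm

theorem enorm_le_enorm_apply_add_tsum_siblings (ha : IsFlow p a) (v : V) :
    ‖a v‖ₑ ≤ ‖a (p v)‖ₑ + ∑' w : ↥(p ⁻¹' {p v} \ {v}), ‖a w‖ₑ := by
  have hsiblings : HasSum (fun w : ↥(p ⁻¹' {p v} \ {v}) ↦ a w) (a (p v) - a v) := by
    have hfiber := hasSum_subtype_iff_indicator.1 (ha (p v))
    have hself := hasSum_subtype_iff_indicator.1 (hasSum_singleton v a)
    have hmem : {v} ⊆ p ⁻¹' {p v} := Set.singleton_subset_iff.2 rfl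
    refine hasSum_subtype_iff_indicator.2 ?_
    rw [Set.indicator_sdiff hmem]
    exact hfiber.sub hself
  calc ‖a v‖ₑ = ‖a (p v) - (a (p v) - a v)‖ₑ := by rw [sub_sub_cancel]
    _ ≤ ‖a (p v)‖ₑ + ‖a (p v) - a v‖ₑ := enorm_sub_le
    _ ≤ ‖a (p v)‖ₑ + ∑' w : ↥(p ⁻¹' {p v} \ {v}), ‖a w‖ₑ := by
      gcongr
      exact hsiblings.tsum_eq ▸ enorm_tsum_le_tsum_enorm

/-- If the flow loses the amount `c` from `v` to `p v`, then the siblings of `v` feed at least `c`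
into `p v`, so one of them starts a branch which is cheap compared to its share. -/
theorem exists_isBackwardOrbit_avoiding (ha : IsFlow p a) (hp : periodicPts p = ∅) {v : V}
    {c : ℝ≥0∞} (hc : c ≠ 0) (hcv : ‖a (p v)‖ₑ + c ≤ ‖a v‖ₑ) {m : V → ℝ≥0∞}
    (hfin : ∑' w : ↥({v}ᶜ : Set V), ‖a w‖ₑ * m w ≠ ∞) :
    ∃ b, b 0 = p v ∧ IsBackwardOrbit p b ∧ b 1 ≠ v ∧
      ∑' n, m (b (n + 1)) ≤ (∑' w : ↥({v}ᶜ : Set V), ‖a w‖ₑ * m w) / c := by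
  have hc' : c ≠ ∞ := ne_top_of_le_ne_top enorm_ne_top (le_add_self.trans hcv)
  have hinflow : c ≤ ∑' w : ↥(p ⁻¹' {p v} \ {v}), ‖a w‖ₑ :=
    (ENNReal.add_le_add_iff_left enorm_ne_top).1
      (hcv.trans (ha.enorm_le_enorm_apply_add_tsum_siblings v))
  have hsiblings := tsum_siblings_tsum_subtree_le hp (fun w ↦ ‖a w‖ₑ * m w) v
  have hsiblings_fin := ne_top_of_le_ne_top hfin hsiblings
  obtain ⟨⟨w, hwp, hwv⟩, haw, hwle⟩ := exists_div_le_tsum_div hc hc' hinflow hsiblings_fin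
  obtain ⟨g, hgw, hg, hgle⟩ := exists_isBackwardOrbit_tsum_le_subtree hp (fun _ ↦ enorm_ne_top)
    ha.enorm_le_tsum_fiber haw (ENNReal.ne_top_of_tsum_ne_top hsiblings_fin ⟨w, hwp, hwv⟩)
  refine ⟨fun n ↦ n.casesOn (p v) g, rfl, ?_, by simpa [hgw] using hwv, ?_⟩
  · rintro (_ | n)
    · simpa [hgw] using hwp
    · exact hg n
  · exact hgle.trans (hwle.trans (ENNReal.div_le_div_right hsiblings c))

/-- Either the flow keeps half of its value at `v` at all the ancestors `p^[(n + 1) * N] v`, whose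
weights are then controlled, or it loses that much between `v` and one of them, and the loss is
compensated along a branch avoiding `v`. -/
theorem hasSmallCompensation (hp : periodicPts p = ∅) {N : ℕ} (hN : 0 < N)
    (ha : ∀ k, IsFlow p^[k * N] a) {v : V} {m : V → ℝ≥0∞} {ε : ℝ≥0∞}
    (hsmall : ∑' w : ↥({v}ᶜ : Set V), ‖a w‖ₑ * m w < ε * (‖a v‖ₑ / 2)) :
    HasSmallCompensation p m v ε := by
  set c := ‖a v‖ₑ / 2
  have hc : c ≠ 0 := right_ne_zero_of_mul (ne_bot_of_gt hsmall)
  have hc' : c ≠ ∞ := ENNReal.div_ne_top enorm_ne_top two_ne_zero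
  have hdiv := ENNReal.div_lt_of_lt_mul hsmall
  by_cases hkeeps : ∀ n, c ≤ ‖a (p^[(n + 1) * N] v)‖ₑ
  · refine ⟨N, hN, Or.inl (lt_of_le_of_lt ?_ hdiv)⟩
    have hinj := iterate_injective_of_periodicPts_eq_empty hp v
    let ancestor (n : ℕ) : ↥({v}ᶜ : Set V) :=
      ⟨p^[(n + 1) * N] v, fun h ↦ (Nat.mul_pos n.succ_pos hN).ne' (hinj h)⟩
    have hancestor : Injective ancestor := fun i j hij ↦
      Nat.succ_injective (Nat.eq_of_mul_eq_mul_right hN (hinj (congrArg Subtype.val hij)))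
    rw [ENNReal.le_div_iff_mul_le (.inl hc) (.inl hc'), ← ENNReal.tsum_mul_right]
    calc ∑' n : ℕ, m (p^[(n + 1) * N] v) * c
        ≤ ∑' n : ℕ, ‖a (ancestor n)‖ₑ * m (ancestor n) := by
          refine ENNReal.tsum_le_tsum fun n ↦ ?_
          rw [mul_comm]
          exact mul_le_mul_left (hkeeps n) _
      _ ≤ ∑' w : ↥({v}ᶜ : Set V), ‖a w‖ₑ * m w :=
          ENNReal.tsum_comp_le_tsum_of_injective hancestor fun w ↦ ‖a w‖ₑ * m w
  · push Not at hkeeps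
    obtain ⟨n, hn⟩ := hkeeps
    have hM : 0 < (n + 1) * N := Nat.mul_pos n.succ_pos hN
    have hloss : ‖a (p^[(n + 1) * N] v)‖ₑ + c ≤ ‖a v‖ₑ :=
      (add_le_add_left hn.le c).trans_eq (ENNReal.add_halves _)
    obtain ⟨g, hgv, hg, hg1, hgle⟩ := (ha (n + 1)).exists_isBackwardOrbit_avoiding
      (periodicPts_iterate_eq_empty hp hM) hc hloss hsmall.ne_top
    obtain ⟨b, hb, hbg⟩ := hg.exists_interpolation hM
    refine ⟨(n + 1) * N, hM, Or.inr ⟨b, ?_, hb, ?_, ?_⟩⟩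
    · rw [← hgv, ← hbg, zero_mul]
    · rwa [← hbg, one_mul] at hg1
    · simpa only [hbg] using hgle.trans_lt hdiv

end IsFlow

end Flows

section InvariantSubmodules

variable {R M : Type*} [Semiring R] [AddCommMonoid M] [Module R M] [TopologicalSpace M]

/-- The vectors whose orbit under `T` tends to zero. -/
def stableSubmodule [ContinuousAdd M] [ContinuousConstSMul R M] (T : M →L[R] M) :
    Submodule R M where
  carrier := {x | Tendsto (fun n ↦ (T ^ n) x) atTop (𝓝 0)}
  zero_mem' := by simpa only [Set.mem_ofPred_eq, map_zero] using tendsto_const_nhds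
  add_mem' hx hy := by simpa only [Set.mem_ofPred_eq, map_add, add_zero] using hx.add hy
  smul_mem' c x hx := by simpa only [Set.mem_ofPred_eq, map_smul, smul_zero] using hx.const_smul c

/-- The vectors with preimages under the powers of `T` which tend to zero. -/
def unstableSubmodule [ContinuousAdd M] [ContinuousConstSMul R M] (T : M →L[R] M) :
    Submodule R M where
  carrier := {y | ∃ u : ℕ → M, Tendsto u atTop (𝓝 0) ∧ ∀ n, (T ^ n) (u n) = y}
  zero_mem' := ⟨0, tendsto_const_nhds, fun n ↦ map_zero _⟩
  add_mem' := by
    rintro y z ⟨u, hu, huy⟩ ⟨w, hw, hwz⟩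
    exact ⟨fun n ↦ u n + w n, by simpa only [add_zero] using hu.add hw,
      fun n ↦ by rw [map_add, huy, hwz]⟩
  smul_mem' := by
    rintro c y ⟨u, hu, huy⟩
    exact ⟨fun n ↦ c • u n, by simpa only [smul_zero] using hu.const_smul c,
      fun n ↦ by rw [map_smul, huy]⟩

theorem pow_mul_apply_eq_self {T : M →L[R] M} {N : ℕ} {x : M} (hx : (T ^ N) x = x) (k : ℕ) :
    (T ^ (k * N)) x = x := by
  have hfixed : IsFixedPt (T ^ N) x := hx
  rw [mul_comm, pow_mul, FunLike.coe_pow_eq_iterate]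
  exact hfixed.iterate k

/-- The submodule of periodic points of `T`. -/
def periodicSubmodule (T : M →L[R] M) : Submodule R M where
  carrier := {x | ∃ N, 1 ≤ N ∧ (T ^ N) x = x}
  zero_mem' := ⟨1, le_rfl, map_zero _⟩
  add_mem' := by
    rintro x y ⟨N, hN, hx⟩ ⟨K, hK, hy⟩
    refine ⟨K * N, Nat.mul_pos hK hN, ?_⟩
    rw [map_add, pow_mul_apply_eq_self hx, mul_comm, pow_mul_apply_eq_self hy]
  smul_mem' := by
    rintro c x ⟨N, hN, hx⟩
    exact ⟨N, hN, by rw [map_smul, hx]⟩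

variable [ContinuousAdd M] [ContinuousConstSMul R M] {T : M →L[R] M} {x : M}

theorem mem_stableSubmodule_of_tendsto_pow_mul {N : ℕ} (hN : 0 < N)
    (hx : Tendsto (fun n ↦ (T ^ (n * N)) x) atTop (𝓝 0)) : x ∈ stableSubmodule T := by
  have hresidue (r : ℕ) : Tendsto (fun n ↦ (T ^ r) ((T ^ (n / N * N)) x)) atTop (𝓝 0) := by
    have hcont := (T ^ r).continuous.tendsto 0
    rw [map_zero] at hcont
    exact hcont.comp (hx.comp (Nat.tendsto_div_const_atTop hN.ne'))
  refine Filter.tendsto_def.2 fun U hU ↦ ?_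
  have hall : ∀ᶠ n in atTop, ∀ r ∈ Finset.range N, (T ^ r) ((T ^ (n / N * N)) x) ∈ U :=
    (Filter.eventually_all_finset _).2 fun r _ ↦ (hresidue r).eventually hU
  filter_upwards [hall] with n hn
  have hmod := hn (n % N) (Finset.mem_range.2 (Nat.mod_lt n hN))
  rwa [← mul_apply_eq_comp, ← pow_add, Nat.mod_add_div'] at hmod

theorem mem_stableSubmodule_of_pow_apply_eq_zero {N : ℕ} (hx : (T ^ N) x = 0) :
    x ∈ stableSubmodule T := by
  refine tendsto_atTop_of_eventually_const (i₀ := N) fun n hn ↦ ?_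
  rw [← Nat.sub_add_cancel hn, pow_add, mul_apply_eq_comp, hx, map_zero]

end InvariantSubmodules

section Hypercyclicity

variable {𝕜 X : Type*} [RCLike 𝕜] [AddCommGroup X] [Module 𝕜 X] [TopologicalSpace X]
  {T : X →L[𝕜] X}

theorem hypercyclic_of_transitive [BaireSpace X] [SecondCountableTopology X]
    (h : ∀ U W : Set X, IsOpen U → IsOpen W → U.Nonempty → W.Nonempty →
      ∃ n : ℕ, (U ∩ (T ^ n) ⁻¹' W).Nonempty) : Hypercyclic T := by
  let entering (W : Set X) : Set X := ⋃ n : ℕ, (T ^ n) ⁻¹' W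
  have hdense : Dense (⋂ W ∈ TopologicalSpace.countableBasis X, entering W) := by
    refine dense_biInter_of_isOpen (fun W hW ↦ isOpen_iUnion fun n ↦
      (TopologicalSpace.isOpen_of_mem_countableBasis hW).preimage (T ^ n).continuous)
      (TopologicalSpace.countable_countableBasis X) fun W hW ↦ ?_
    refine dense_iff_inter_open.2 fun U hU hUne ↦ ?_
    obtain ⟨n, x, hxU, hxW⟩ := h U W hU (TopologicalSpace.isOpen_of_mem_countableBasis hW) hUne
      (TopologicalSpace.nonempty_of_mem_countableBasis hW)
    exact ⟨x, hxU, Set.mem_iUnion.2 ⟨n, hxW⟩⟩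
  obtain ⟨x, hx⟩ := hdense.nonempty
  refine ⟨x, (TopologicalSpace.isBasis_countableBasis X).dense_iff.2 fun W hW _ ↦ ?_⟩
  obtain ⟨n, hn⟩ := Set.mem_iUnion.1 (Set.mem_iInter₂.1 hx W hW)
  exact ⟨(T ^ n) x, hn, n, rfl⟩

theorem hypercyclic_of_dense_stable_of_dense_unstable [ContinuousAdd X] [ContinuousConstSMul 𝕜 X]
    [BaireSpace X] [SecondCountableTopology X] (hs : Dense (stableSubmodule T : Set X))
    (hu : Dense (unstableSubmodule T : Set X)) : Hypercyclic T := by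
  refine hypercyclic_of_transitive fun U W hU hW hUne hWne ↦ ?_
  obtain ⟨x, hxU, hx⟩ := hs.inter_open_nonempty U hU hUne
  obtain ⟨y, hyW, u, hu, huy⟩ := hu.inter_open_nonempty W hW hWne
  have hstart : Tendsto (fun n ↦ x + u n) atTop (𝓝 x) := by simpa using hu.const_add x
  have hend : Tendsto (fun n ↦ (T ^ n) (x + u n)) atTop (𝓝 y) := by
    simpa only [map_add, huy, zero_add] using Tendsto.add_const y hx
  obtain ⟨n, hnU, hnW⟩ :=
    ((hstart.eventually (hU.mem_nhds hxU)).and (hend.eventually (hW.mem_nhds hyW))).exists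
  exact ⟨n, x + u n, hnU, hnW⟩

end Hypercyclicity

section BackwardShift

variable {𝕜 X : Type*} [NormedField 𝕜] [NormedAddCommGroup X] [NormedSpace 𝕜 X]
  {p : V → V} {e : V → X} {T : X →L[𝕜] X}

theorem semiconj_pow (hT : Semiconj e p T) (n : ℕ) : Semiconj e p^[n] ⇑(T ^ n) := by
  rw [FunLike.coe_pow_eq_iterate]
  exact hT.iterate_right n

theorem apply_tsum_of_isBackwardOrbit (hT : Semiconj e p T) {b : ℕ → V} (hb : IsBackwardOrbit p b)
    (hsum : Summable fun n ↦ e (b n)) : T (∑' n, e (b n)) = e (p (b 0)) + ∑' n, e (b n) := by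
  rw [T.map_tsum hsum, (hsum.mapL T).tsum_eq_zero_add]
  have hshift (n : ℕ) : T (e (b (n + 1))) = e (b n) := by rw [← hT.eq, hb]
  simp only [hshift, hT.eq]

theorem pow_apply_add_tsum_iterate (hT : Semiconj e p T) {v : V} {N : ℕ}
    (hsum : Summable fun n ↦ e (p^[(n + 1) * N] v)) :
    (T ^ N) (e v + ∑' n, e (p^[(n + 1) * N] v)) = ∑' n, e (p^[(n + 1) * N] v) := by
  have hshift (n : ℕ) : (T ^ N) (e (p^[n * N] v)) = e (p^[(n + 1) * N] v) := by
    rw [← semiconj_pow hT, ← iterate_add_apply, add_one_mul, add_comm]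
  have hstart : (T ^ N) (e v) = e (p^[(0 + 1) * N] v) := by
    simpa only [zero_mul, iterate_zero, id_eq] using hshift 0
  rw [map_add, (T ^ N).map_tsum hsum, hsum.tsum_eq_zero_add, hstart]
  simp only [hshift]

theorem mem_unstableSubmodule_of_hasSummableBranch (hT : Semiconj e p T) {v : V}
    (hv : HasSummableBranch p (‖e ·‖ₑ) v) : e v ∈ unstableSubmodule T := by
  obtain ⟨b, rfl, hb, hfin⟩ := hv
  refine ⟨fun n ↦ e (b n), ?_, fun n ↦ ?_⟩
  · refine (tendsto_add_atTop_iff_nat 1).1 (tendsto_zero_iff_enorm_tendsto_zero.2 ?_)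
    exact ENNReal.tendsto_atTop_zero_of_tsum_ne_top hfin.ne
  · rw [← semiconj_pow hT, hb.iterate_apply_self]

theorem mem_closure_of_forall_enorm_lt {s : Set X} {x : X}
    (h : ∀ ε : ℝ, 0 < ε → ∃ f, ‖f‖ₑ < ENNReal.ofReal ε ∧ x + f ∈ s) : x ∈ closure s := by
  refine Metric.mem_closure_iff.2 fun ε hε ↦ ?_
  obtain ⟨f, hf, hfs⟩ := h ε hε
  rw [← ofReal_norm, ENNReal.ofReal_lt_ofReal_iff hε] at hf
  exact ⟨x + f, hfs, by rwa [dist_self_add_right]⟩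

theorem mem_closure_stableSubmodule_of_hasSmallCompensation (hT : Semiconj e p T) {v : V}
    (hv : ∀ ε : ℝ, 0 < ε → HasSmallCompensation p (‖e ·‖ₑ) v (ENNReal.ofReal ε)) :
    e v ∈ closure (stableSubmodule T : Set X) := by
  refine mem_closure_of_forall_enorm_lt fun ε hε ↦ ?_
  obtain ⟨N, hN, hancestors | ⟨b, hbv, hb, -, hbranch⟩⟩ := hv ε hε
  · refine ⟨0, by simpa using hε, ?_⟩
    rw [add_zero]
    refine mem_stableSubmodule_of_tendsto_pow_mul hN ((tendsto_add_atTop_iff_nat 1).1 ?_)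
    simp only [← semiconj_pow hT _ _]
    exact tendsto_zero_iff_enorm_tendsto_zero.2
      (ENNReal.tendsto_atTop_zero_of_tsum_ne_top hancestors.ne_top)
  · refine ⟨-e (b N), ?_, mem_stableSubmodule_of_pow_apply_eq_zero (N := N) ?_⟩
    · rw [enorm_neg]
      calc ‖e (b N)‖ₑ = ‖e (b ((0 + 1) * N))‖ₑ := by rw [zero_add, one_mul]
        _ ≤ ∑' n, ‖e (b ((n + 1) * N))‖ₑ := ENNReal.le_tsum 0
        _ < ENNReal.ofReal ε := hbranch
    · rw [map_add, map_neg, ← semiconj_pow hT, ← semiconj_pow hT, hb.iterate_apply_self, hbv,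
        add_neg_cancel]

theorem exists_compensator_of_ancestors [CompleteSpace X] (hT : Semiconj e p T) {v : V} {ε : ℝ≥0∞}
    {N : ℕ} (hlt : ∑' n : ℕ, ‖e (p^[(n + 1) * N] v)‖ₑ < ε) {k : ℕ} (hk : 1 ≤ k) :
    ∃ f, ‖f‖ₑ < ε ∧ (T ^ (k * N)) (e v + f) = f := by
  have hlt_mul : ∑' n, ‖e (p^[(n + 1) * (k * N)] v)‖ₑ < ε := by
    obtain ⟨j, rfl⟩ := Nat.exists_eq_add_of_le' hk
    have hinj : Injective fun n ↦ n * (j + 1) + j := fun a b hab ↦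
      Nat.eq_of_mul_eq_mul_right hk (Nat.add_right_cancel hab)
    calc ∑' n, ‖e (p^[(n + 1) * ((j + 1) * N)] v)‖ₑ
        = ∑' n, ‖e (p^[(n * (j + 1) + j + 1) * N] v)‖ₑ := by
          simp only [← mul_assoc, add_one_mul _ (j + 1), add_assoc]
      _ ≤ ∑' n, ‖e (p^[(n + 1) * N] v)‖ₑ :=
          ENNReal.tsum_comp_le_tsum_of_injective hinj fun n ↦ ‖e (p^[(n + 1) * N] v)‖ₑ
      _ < ε := hlt
  exact ⟨∑' n, e (p^[(n + 1) * (k * N)] v), enorm_tsum_le_tsum_enorm.trans_lt hlt_mul,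
    pow_apply_add_tsum_iterate hT (Summable.of_enorm hlt_mul.ne_top)⟩

theorem exists_compensator_of_branch [CompleteSpace X] (hT : Semiconj e p T) {v : V} {ε : ℝ≥0∞}
    {N : ℕ} {b : ℕ → V} (hbv : b 0 = p^[N] v) (hb : IsBackwardOrbit p b)
    (hlt : ∑' n, ‖e (b ((n + 1) * N))‖ₑ < ε) {k : ℕ} (hk : 1 ≤ k) :
    ∃ f, ‖f‖ₑ < ε ∧ (T ^ (k * N)) (e v + f) = f := by
  have hlt_mul : ∑' n, ‖e (b ((n * k + 1) * N))‖ₑ < ε := by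
    have hinj : Injective fun n ↦ n * k := fun i j hij ↦ Nat.eq_of_mul_eq_mul_right hk hij
    exact (ENNReal.tsum_comp_le_tsum_of_injective hinj fun n ↦ ‖e (b ((n + 1) * N))‖ₑ).trans_lt hlt
  have horbit : IsBackwardOrbit p^[k * N] fun n ↦ b ((n * k + 1) * N) := fun n ↦ by
    simp only [show ((n + 1) * k + 1) * N = (n * k + 1) * N + k * N by ring, hb.iterate_apply]
  have hstart : p^[k * N] (b N) = p^[k * N] v := by
    obtain ⟨j, rfl⟩ := Nat.exists_eq_add_of_le' hk
    rw [add_one_mul, iterate_add_apply, hb.iterate_apply_self, hbv, ← iterate_add_apply]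
  refine ⟨-∑' n, e (b ((n * k + 1) * N)), ?_, ?_⟩
  · rw [enorm_neg]
    exact enorm_tsum_le_tsum_enorm.trans_lt hlt_mul
  · rw [map_add, map_neg, apply_tsum_of_isBackwardOrbit (semiconj_pow hT _) horbit
      (Summable.of_enorm hlt_mul.ne_top), ← semiconj_pow hT]
    simp only [zero_mul, zero_add, one_mul, hstart]
    abel

theorem exists_compensator [CompleteSpace X] (hT : Semiconj e p T) {v : V} {ε : ℝ≥0∞}
    (hv : HasSmallCompensation p (‖e ·‖ₑ) v ε) :
    ∃ N, 1 ≤ N ∧ ∀ k, 1 ≤ k → ∃ f, ‖f‖ₑ < ε ∧ (T ^ (k * N)) (e v + f) = f := by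
  obtain ⟨N, hN, hlt | ⟨b, hbv, hb, -, hlt⟩⟩ := hv
  · exact ⟨N, hN, fun k ↦ exists_compensator_of_ancestors hT hlt⟩
  · exact ⟨N, hN, fun k ↦ exists_compensator_of_branch hT hbv hb hlt⟩

theorem exists_branch_tail [CompleteSpace X] (hT : Semiconj e p T) {v : V}
    (hv : HasSummableBranch p (‖e ·‖ₑ) v) {N : ℕ} (hN : 1 ≤ N) {ε : ℝ≥0∞} (hε : 0 < ε) :
    ∃ k, 1 ≤ k ∧ ∃ g, ‖g‖ₑ < ε ∧ (T ^ (k * N)) g = e v + g := by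
  obtain ⟨k, hk, b, hbv, hb, hlt⟩ := hv.exists_tsum_lt hN hε
  have horbit : IsBackwardOrbit p^[k * N] fun n ↦ b ((n + 1) * (k * N)) :=
    fun n ↦ hb.sample (k * N) (n + 1)
  refine ⟨k, hk, ∑' n, e (b ((n + 1) * (k * N))), enorm_tsum_le_tsum_enorm.trans_lt hlt, ?_⟩
  rw [apply_tsum_of_isBackwardOrbit (semiconj_pow hT _) horbit (Summable.of_enorm hlt.ne_top)]
  simp only [zero_add, one_mul, hb.iterate_apply_self, hbv]

/-- If `T ^ N` maps `g` to `e v + g` and `e v + f` to `f`, then it fixes `e v + (g + f)`. -/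
theorem mem_closure_periodicSubmodule [CompleteSpace X] (hT : Semiconj e p T) {v : V}
    (hbranch : HasSummableBranch p (‖e ·‖ₑ) v)
    (hcomp : ∀ ε : ℝ, 0 < ε → HasSmallCompensation p (‖e ·‖ₑ) v (ENNReal.ofReal ε)) :
    e v ∈ closure (periodicSubmodule T : Set X) := by
  refine mem_closure_of_forall_enorm_lt fun ε hε ↦ ?_
  obtain ⟨N, hN, hcompensator⟩ := exists_compensator hT (hcomp (ε / 2) (half_pos hε))
  obtain ⟨k, hk, g, hg, hTg⟩ :=
    exists_branch_tail hT hbranch hN (ENNReal.ofReal_pos.2 (half_pos hε))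
  obtain ⟨f, hf, hTf⟩ := hcompensator k hk
  refine ⟨g + f, ?_, k * N, Nat.mul_pos hk hN, ?_⟩
  · calc ‖g + f‖ₑ ≤ ‖g‖ₑ + ‖f‖ₑ := enorm_add_le g f
      _ < ENNReal.ofReal (ε / 2) + ENNReal.ofReal (ε / 2) := ENNReal.add_lt_add hg hf
      _ = ENNReal.ofReal ε := by
        rw [← ENNReal.ofReal_add (half_pos hε).le (half_pos hε).le, add_halves]
  · calc (T ^ (k * N)) (e v + (g + f)) = (T ^ (k * N)) g + (T ^ (k * N)) (e v + f) := by
          rw [← map_add]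
          congr 1
          abel
      _ = e v + (g + f) := by rw [hTg, hTf, add_assoc]

theorem dense_of_dense_span (he : Dense (Submodule.span 𝕜 (Set.range e) : Set X))
    {W : Submodule 𝕜 X} (hW : ∀ v, e v ∈ closure (W : Set X)) : Dense (W : Set X) := by
  rw [← W.topologicalClosure_coe] at hW
  have hle : Submodule.span 𝕜 (Set.range e) ≤ W.topologicalClosure :=
    Submodule.span_le.2 (Set.range_subset_iff.2 hW)
  have hdense : Dense (W.topologicalClosure : Set X) := he.mono hle
  rwa [W.topologicalClosure_coe, dense_closure] at hdense

end BackwardShift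

theorem chaoticOp_of_hasSummableBranch_of_hasSmallCompensation [Countable V] {𝕜 X : Type*}
    [RCLike 𝕜] [NormedAddCommGroup X] [NormedSpace 𝕜 X] [CompleteSpace X] {p : V → V} {e : V → X}
    {T : X →L[𝕜] X} (he : Dense (Submodule.span 𝕜 (Set.range e) : Set X)) (hT : Semiconj e p T)
    (hbranch : ∀ v, HasSummableBranch p (‖e ·‖ₑ) v)
    (hcomp : ∀ v, ∀ ε : ℝ, 0 < ε → HasSmallCompensation p (‖e ·‖ₑ) v (ENNReal.ofReal ε)) :
    ChaoticOp T := by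
  have hseparable : TopologicalSpace.IsSeparable (Set.univ : Set X) := by
    rw [← he.closure_eq]
    exact ((Set.countable_range e).isSeparable.span).closure
  have : SecondCountableTopology X :=
    have := TopologicalSpace.isSeparable_univ_iff.1 hseparable
    UniformSpace.secondCountable_of_separable X
  refine ⟨hypercyclic_of_dense_stable_of_dense_unstable ?_ ?_, ?_⟩
  · exact dense_of_dense_span he fun v ↦
      mem_closure_stableSubmodule_of_hasSmallCompensation hT (hcomp v)
  · exact dense_of_dense_span he fun v ↦
      subset_closure (mem_unstableSubmodule_of_hasSummableBranch hT (hbranch v))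
  · exact dense_of_dense_span (W := periodicSubmodule T) he fun v ↦
      mem_closure_periodicSubmodule hT (hbranch v) (hcomp v)

section ParentFunction

variable {p : V → V} {v : V} {m : V → ℝ≥0∞}

theorem parIter_some (p : V → V) (n : ℕ) (v : V) :
    parIter (fun v ↦ some (p v)) n v = some (p^[n] v) := by
  induction n generalizing v with
  | zero => rfl
  | succ _ ih => exact ih (p v)

theorem children_some (p : V → V) (v : V) : children (fun v ↦ some (p v)) v = p ⁻¹' {v} := by
  ext w
  exact Option.some_inj

theorem isBranch_some_iff {b : ℕ → V} :
    IsBranch (fun v ↦ some (p v)) v b ↔ b 0 = v ∧ IsBackwardOrbit p b := by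
  simp only [IsBranch, children_some, Set.mem_preimage, Set.mem_singleton_iff, IsBackwardOrbit]

theorem periodicPts_eq_empty_of_parIter_ne
    (h : ∀ v n, 0 < n → parIter (fun v ↦ some (p v)) n v ≠ some v) : periodicPts p = ∅ := by
  refine Set.eq_empty_of_forall_notMem fun v ⟨n, hn, hv⟩ ↦ h v n hn ?_
  rw [parIter_some, hv.eq]

theorem hasSummableBranch_iff :
    HasSummableBranch p m v ↔
      ∃ b, IsBranch (fun v ↦ some (p v)) v b ∧ ∑' n, m (b (n + 1)) < ∞ := by
  simp only [HasSummableBranch, isBranch_some_iff, and_assoc]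

theorem hasSmallCompensation_iff {ε : ℝ≥0∞} :
    HasSmallCompensation p m v ε ↔ ∃ N, 1 ≤ N ∧
      (∑' n : ℕ, (parIter (fun v ↦ some (p v)) ((n + 1) * N) v).elim 0 m < ε ∨
        ∃ v₀, parIter (fun v ↦ some (p v)) N v = some v₀ ∧
          ∃ b, IsBranch (fun v ↦ some (p v)) v₀ b ∧ b N ≠ v ∧
            ∑' n, m (b ((n + 1) * N)) < ε) := by
  simp only [HasSmallCompensation, parIter_some, Option.elim_some, Option.some_inj,
    isBranch_some_iff, exists_eq_left', and_assoc]

end ParentFunction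

theorem IsShiftRep.hasSum_fiber {𝕜 X : Type*} [RCLike 𝕜] [AddCommGroup X] [Module 𝕜 X]
    [TopologicalSpace X] {ι : X →ₗ[𝕜] V → 𝕜} {T : X →L[𝕜] X} {p : V → V}
    (hT : IsShiftRep (fun v ↦ some (p v)) (fun _ ↦ 1) ι T) (x : X) (v : V) :
    HasSum (fun w : p ⁻¹' {v} ↦ ι x w) (ι (T x) v) := by
  have h := hT x v
  simp only [one_mul] at h
  rwa [children_some] at h

namespace IsLpSpaceRep

variable {𝕜 X : Type*} [RCLike 𝕜] [NormedAddCommGroup X] [NormedSpace 𝕜 X] {μ : V → 𝕜}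
  {ι : X →ₗ[𝕜] V → 𝕜} {e : V → X} {p : V → V} {T : X →L[𝕜] X}

theorem enorm_eq_tsum (hX : IsLpSpaceRep ι μ 1) (x : X) :
    ‖x‖ₑ = ∑' v, ‖ι x v‖ₑ * nw μ v := by
  have h := hX.2.2 x
  simp only [ENNReal.rpow_one, div_one, nnnorm_mul, ENNReal.coe_mul] at h
  exact h

theorem exists_unitVectors (hX : IsLpSpaceRep ι μ 1) :
    ∃ e : V → X, ∀ v, ι (e v) = Pi.single v 1 := by
  have hmem (v : V) : Pi.single v 1 ∈ Set.range ι := by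
    refine (hX.2.1 _).1 ?_
    rw [tsum_eq_single v fun w hw ↦ by simp [Pi.single_eq_of_ne hw]]
    simp
  choose e he using hmem
  exact ⟨e, he⟩

theorem enorm_unitVector (hX : IsLpSpaceRep ι μ 1) (he : ∀ v, ι (e v) = Pi.single v 1) (v : V) :
    ‖e v‖ₑ = nw μ v := by
  rw [hX.enorm_eq_tsum, tsum_eq_single v fun w hw ↦ by simp [he, Pi.single_eq_of_ne hw]]
  simp [he]

theorem continuous_coeff (hX : IsLpSpaceRep ι μ 1) (hμ : ∀ v, μ v ≠ 0) (v : V) :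
    Continuous fun x ↦ ι x v := by
  refine AddMonoidHomClass.continuous_of_bound (LinearMap.proj v ∘ₗ ι) ‖μ v‖⁻¹ fun x ↦ ?_
  have hle : ‖ι x v‖ₑ * ‖μ v‖ₑ ≤ ‖x‖ₑ :=
    (ENNReal.le_tsum v).trans_eq (hX.enorm_eq_tsum x).symm
  rw [← enorm_mul, enorm_le_iff_norm_le, norm_mul] at hle
  rw [inv_mul_eq_div]
  exact (le_div_iff₀ (norm_pos_iff.2 (hμ v))).2 hle

theorem hasSum_coeff_smul [CompleteSpace X] (hX : IsLpSpaceRep ι μ 1) (hμ : ∀ v, μ v ≠ 0)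
    (he : ∀ v, ι (e v) = Pi.single v 1) (x : X) : HasSum (fun v ↦ ι x v • e v) x := by
  have hsum : Summable fun v ↦ ι x v • e v := by
    refine Summable.of_enorm ?_
    simp only [enorm_smul, hX.enorm_unitVector he, ← hX.enorm_eq_tsum]
    exact enorm_ne_top
  have hcoeff (v : V) : ι (∑' w, ι x w • e w) v = ι x v := by
    have hmap := hsum.hasSum.map (LinearMap.proj v ∘ₗ ι) (hX.continuous_coeff hμ v)
    have hsingle := hasSum_single v fun w (hw : w ≠ v) ↦
      show ι (ι x w • e w) v = 0 by simp [he, Pi.single_eq_of_ne hw.symm]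
    have hself : ι (ι x v • e v) v = ι x v := by simp [he]
    rw [hself] at hsingle
    exact hmap.unique hsingle
  convert hsum.hasSum
  exact hX.1 (funext fun v ↦ (hcoeff v).symm)

theorem dense_span_unitVectors [CompleteSpace X] (hX : IsLpSpaceRep ι μ 1) (hμ : ∀ v, μ v ≠ 0)
    (he : ∀ v, ι (e v) = Pi.single v 1) : Dense (Submodule.span 𝕜 (Set.range e) : Set X) := by
  intro x
  refine mem_closure_of_tendsto (hX.hasSum_coeff_smul hμ he x) (.of_forall fun s ↦ ?_)
  exact Submodule.sum_mem _ fun v _ ↦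
    Submodule.smul_mem _ _ (Submodule.subset_span (Set.mem_range_self v))

theorem tsum_compl_le_enorm_sub (hX : IsLpSpaceRep ι μ 1) (he : ∀ v, ι (e v) = Pi.single v 1)
    (x : X) (v : V) :
    ∑' w : ↥({v}ᶜ : Set V), ‖ι x w‖ₑ * nw μ w ≤ ‖x - ι x v • e v‖ₑ := by
  have hcoeff (w : ↥({v}ᶜ : Set V)) : ι x w = ι (x - ι x v • e v) w := by
    simp [he, Pi.single_eq_of_ne w.2]
  simp only [hcoeff]
  rw [hX.enorm_eq_tsum]
  exact ENNReal.tsum_comp_le_tsum_of_injective Subtype.val_injective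
    fun w ↦ ‖ι (x - ι x v • e v) w‖ₑ * nw μ w

theorem semiconj_unitVector (hX : IsLpSpaceRep ι μ 1) (he : ∀ v, ι (e v) = Pi.single v 1)
    (hT : IsShiftRep (fun v ↦ some (p v)) (fun _ ↦ 1) ι T) : Semiconj e p T := by
  refine fun u ↦ hX.1 (funext fun v ↦ ?_)
  refine HasSum.unique ?_ (hT.hasSum_fiber (e u) v)
  refine hasSum_subtype_iff_indicator.2 ?_
  convert hasSum_ite_eq u (ι (e (p u)) v) using 2 with w
  by_cases hw : w = u <;> simp [he, Set.indicator, hw, Pi.single_apply, eq_comm]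

theorem hasSum_iterate_fiber [CompleteSpace X] (hX : IsLpSpaceRep ι μ 1) (hμ : ∀ v, μ v ≠ 0)
    (he : ∀ v, ι (e v) = Pi.single v 1) (hT : Semiconj e p T) (n : ℕ) (x : X) (u : V) :
    HasSum (fun w : p^[n] ⁻¹' {u} ↦ ι x w) (ι ((T ^ n) x) u) := by
  have hterm (w : V) : ι ((T ^ n) (ι x w • e w)) u = (p^[n] ⁻¹' {u}).indicator (ι x) w := by
    rw [map_smul, ← semiconj_pow hT]
    by_cases hw : p^[n] w = u <;> simp [he, hw]
  have hsum := ((T ^ n).hasSum (hX.hasSum_coeff_smul hμ he x)).map (LinearMap.proj u ∘ₗ ι)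
    (hX.continuous_coeff hμ u)
  exact hasSum_subtype_iff_indicator.2 (hsum.congr_fun fun w ↦ (hterm w).symm)

theorem isFlow_of_pow_apply_eq_self [CompleteSpace X] (hX : IsLpSpaceRep ι μ 1)
    (hμ : ∀ v, μ v ≠ 0) (he : ∀ v, ι (e v) = Pi.single v 1) (hT : Semiconj e p T) {N : ℕ} {x : X}
    (hx : (T ^ N) x = x) : IsFlow p^[N] (ι x) := fun u ↦ by
  simpa only [hx] using hX.hasSum_iterate_fiber hμ he hT N x u

/-- Adding up the absolute coefficients over one full period of the orbit gives a single function
which is dominated by its sums over children. -/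
theorem hasSummableBranch_of_dense_periodic (hX : IsLpSpaceRep ι μ 1) (hμ : ∀ v, μ v ≠ 0)
    (he : ∀ v, ι (e v) = Pi.single v 1) (hT : IsShiftRep (fun v ↦ some (p v)) (fun _ ↦ 1) ι T)
    (hp : periodicPts p = ∅) (hdense : Dense {x | IsPeriodicPoint T x}) (v : V) :
    HasSummableBranch p (nw μ) v := by
  obtain ⟨x, hxv, N, hN, hx⟩ := hdense.inter_open_nonempty {x | ι x v ≠ 0}
    (isOpen_ne_fun (hX.continuous_coeff hμ v) continuous_const)
    ⟨e v, by simp [he]⟩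
  obtain ⟨M, rfl⟩ := Nat.exists_eq_add_of_le' hN
  let F (u : V) : ℝ≥0∞ := ∑ j ∈ Finset.range (M + 1), ‖ι ((T ^ j) x) u‖ₑ
  have hF (u : V) : F u ≠ ∞ := ENNReal.sum_ne_top.2 fun _ _ ↦ enorm_ne_top
  have hFle (u : V) : F u ≤ ∑' w : p ⁻¹' {u}, F w := by
    calc F u = ∑ j ∈ Finset.range (M + 1), ‖ι ((T ^ (j + 1)) x) u‖ₑ := by
          rw [Finset.sum_range_succ, hx]
          exact Finset.sum_range_succ' (fun j ↦ ‖ι ((T ^ j) x) u‖ₑ) M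
      _ ≤ ∑ j ∈ Finset.range (M + 1), ∑' w : p ⁻¹' {u}, ‖ι ((T ^ j) x) w‖ₑ := by
          refine Finset.sum_le_sum fun j _ ↦ ?_
          rw [pow_succ', mul_apply_eq_comp, ← (hT.hasSum_fiber _ u).tsum_eq]
          exact enorm_tsum_le_tsum_enorm
      _ = ∑' w : p ⁻¹' {u}, F w := (Summable.tsum_finsetSum fun _ _ ↦ ENNReal.summable).symm
  have hFv : F v ≠ 0 := fun h ↦
    hxv (enorm_eq_zero.1 (Finset.sum_eq_zero_iff.1 h 0 (Finset.mem_range.2 M.succ_pos)))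
  have hfin : ∑' u, F u * nw μ u ≠ ∞ := by
    have hnorm : ∑' u, F u * nw μ u = ∑ j ∈ Finset.range (M + 1), ‖(T ^ j) x‖ₑ := by
      simp only [F, Finset.sum_mul, hX.enorm_eq_tsum]
      exact Summable.tsum_finsetSum fun _ _ ↦ ENNReal.summable
    rw [hnorm]
    exact ENNReal.sum_ne_top.2 fun _ _ ↦ enorm_ne_top
  exact hasSummableBranch_of_le_tsum_fiber hp hF hFle hFv hfin

theorem hasSmallCompensation_of_dense_periodic [CompleteSpace X] (hX : IsLpSpaceRep ι μ 1)
    (hμ : ∀ v, μ v ≠ 0) (he : ∀ v, ι (e v) = Pi.single v 1) (hT : Semiconj e p T)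
    (hp : periodicPts p = ∅) (hdense : Dense {x | IsPeriodicPoint T x}) (v : V) {ε : ℝ}
    (hε : 0 < ε) : HasSmallCompensation p (nw μ) v (ENNReal.ofReal ε) := by
  have hcoeff := hX.continuous_coeff hμ v
  have hopen : IsOpen {x | ‖x - ι x v • e v‖ₑ < ENNReal.ofReal ε * (‖ι x v‖ₑ / 2)} := by
    refine isOpen_lt (continuous_id.sub (hcoeff.smul continuous_const)).enorm ?_
    exact (ENNReal.continuous_const_mul ENNReal.ofReal_ne_top).comp
      ((ENNReal.continuous_div_const 2 two_ne_zero).comp hcoeff.enorm)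
  obtain ⟨x, hxv, N, hN, hx⟩ := hdense.inter_open_nonempty _ hopen ⟨e v, by simp [he, hε]⟩
  exact IsFlow.hasSmallCompensation hp hN
    (fun k ↦ hX.isFlow_of_pow_apply_eq_self hμ he hT (pow_mul_apply_eq_self hx k))
    ((hX.tsum_compl_le_enorm_sub he x v).trans_lt hxv)

end IsLpSpaceRep

theorem statement14_general
    {𝕜 : Type*} [RCLike 𝕜] {V : Type*} [Countable V] (par : V → Option V)
    (hAcyclic : ∀ (v : V) (n : ℕ), 0 < n → parIter par n v ≠ some v) (hUnrooted : Unrooted par)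
    (μ : V → 𝕜) (hμ : ∀ v : V, μ v ≠ 0)
    {X : Type*} [NormedAddCommGroup X] [NormedSpace 𝕜 X] [CompleteSpace X]
    (ι : X →ₗ[𝕜] V → 𝕜) (hX : IsLpSpaceRep ι μ 1)
    (T : X →L[𝕜] X) (hT : IsShiftRep par (fun _ : V => (1 : 𝕜)) ι T) :
    ChaoticOp T ↔
      ∀ v : V,
        (∃ b : ℕ → V, IsBranch par v b ∧ (∑' n : ℕ, nw μ (b (n + 1))) < ⊤) ∧
        ∀ ε : ℝ, 0 < ε → ∃ N : ℕ, 1 ≤ N ∧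
          ((∑' n : ℕ, (parIter par ((n + 1) * N) v).elim 0 (nw μ)) < ENNReal.ofReal ε ∨
            ∃ v₀ : V, parIter par N v = some v₀ ∧
              ∃ b : ℕ → V, IsBranch par v₀ b ∧ b N ≠ v ∧
                (∑' n : ℕ, nw μ (b ((n + 1) * N))) < ENNReal.ofReal ε) := by
  obtain ⟨p, rfl⟩ : ∃ p : V → V, par = fun v ↦ some (p v) := by
    choose p hpar using fun v ↦ Option.ne_none_iff_exists'.1 (hUnrooted v)
    exact ⟨p, funext hpar⟩
  obtain ⟨e, he⟩ := hX.exists_unitVectors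
  have hp := periodicPts_eq_empty_of_parIter_ne hAcyclic
  have hsemiconj := hX.semiconj_unitVector he hT
  simp only [← hasSummableBranch_iff, ← hasSmallCompensation_iff]
  refine ⟨fun ⟨_, hdense⟩ v ↦ ⟨?_, fun ε hε ↦ ?_⟩, fun h ↦ ?_⟩
  · exact hX.hasSummableBranch_of_dense_periodic hμ he hT hp hdense v
  · exact hX.hasSmallCompensation_of_dense_periodic hμ he hsemiconj hp hdense v hε
  · rw [← funext (hX.enorm_unitVector he)] at h
    exact chaoticOp_of_hasSummableBranch_of_hasSmallCompensation
      (hX.dense_span_unitVectors hμ he) hsemiconj (fun v ↦ (h v).1) (fun v ↦ (h v).2)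

/-- Theorem 8.3 / `t-char1mubil`: on a leafless unrooted tree, the
unweighted backward shift, as an operator on `ℓ^1(V,μ)`, is chaotic iff every vertex has a
branch with summable weights, and for every `ε > 0` there is `N ≥ 1` such that either the
weights of the ancestors `par^{nN}(v)` sum to less than `ε`, or some branch from
`par^N(v)` avoiding `v` at step `N` has `∑_{n ≥ 1} |μ_{v_{nN}}| < ε`. -/
theorem statement14
    {𝕜 : Type*} [RCLike 𝕜] {V : Type*} (par : V → Option V) (hTree : IsDirectedTree par)
    (hUnrooted : Unrooted par) (hLeafless : Leafless par)
    (μ : V → 𝕜) (hμ : ∀ v : V, μ v ≠ 0)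
    {X : Type*} [NormedAddCommGroup X] [NormedSpace 𝕜 X] [CompleteSpace X]
    (ι : X →ₗ[𝕜] V → 𝕜) (hX : IsLpSpaceRep ι μ 1)
    (T : X →L[𝕜] X) (hT : IsShiftRep par (fun _ : V => (1 : 𝕜)) ι T) :
    ChaoticOp T ↔
      ∀ v : V,
        (∃ b : ℕ → V, IsBranch par v b ∧ (∑' n : ℕ, nw μ (b (n + 1))) < ⊤) ∧
        ∀ ε : ℝ, 0 < ε → ∃ N : ℕ, 1 ≤ N ∧
          ((∑' n : ℕ, (parIter par ((n + 1) * N) v).elim 0 (nw μ)) < ENNReal.ofReal ε ∨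
            ∃ v₀ : V, parIter par N v = some v₀ ∧
              ∃ b : ℕ → V, IsBranch par v₀ b ∧ b N ≠ v ∧
                (∑' n : ℕ, nw μ (b ((n + 1) * N))) < ENNReal.ofReal ε) := by
  have := hTree.countable
  exact statement14_general par hTree.acyclic hUnrooted μ hμ ι hX T hT

end PaperTree
end

section
/- Let V be a leafless symmetric directed tree with |Chi(v)|<∞ for all v∈V, and let λ=(λ_n)_n be a symmetric weight of nonzero scalars. Let X=ℓ^p(V) with 1<p<∞ (with conjugate exponent p*) or X=c_0(V), and suppose the weighted backward shift B_λ is an operator on X. (a) If the tree is rooted, or unrooted without a free left end, then B_λ is chaotic if and only if: ∑_{n=1}^∞ 1/((γ_0⋯γ_{n-1})^{p/p*}·|λ_1⋯λ_n|^p) < ∞ when X=ℓ^p(V), respectively γ_0⋯γ_{n-1}·|λ_1⋯λ_n| → ∞ as n→∞ when X=c_0(V). (b) If the tree is unrooted with a free left end, then B_λ is chaotic if and only if the condition in (a) holds and, in addition, ∑_{n=1}^∞ |λ_{-n+1}⋯λ_0|^p < ∞ when X=ℓ^p(V), respectively λ_{-n+1}⋯λ_0 → 0 as n→∞ when X=c_0(V).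 -/
open scoped ENNReal NNReal Topology Classical
open Filter

namespace PaperTree

/-! ### Directed trees -/

variable {V : Type*}

/-! ### The generalized continued fractions `c_p` and resistances `r_p` -/

section Constants

/-- Conjugate exponent. -/
noncomputable def conjExp (p : ℝ) : ℝ := p / (p - 1)

variable {V : Type*}

/-- `cpAux chi w p m v` is the continued fraction `c_p` of the subtree of descendants of `v`
(with respect to the children map `chi`) truncated at depth `m`, with weight `w`. -/
noncomputable def cpAux (chi : V → Set V) (w : V → ℝ≥0∞) (p : ℝ) : ℕ → V → ℝ≥0∞
  | 0, _ => 0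
  | m + 1, v =>
      if chi v = ∅ then 0
      else (∑' u : ↥(chi v),
              (w u.1 ^ p + cpAux chi w p m u.1 ^ p) ^ (-(conjExp p / p))) ^ (-(1 / conjExp p))

/-- The continued fraction `c_p(V(v), w)` of order `1 < p < ∞`. -/
noncomputable def cpC (chi : V → Set V) (w : V → ℝ≥0∞) (p : ℝ) (v : V) : ℝ≥0∞ :=
  ⨆ m : ℕ, cpAux chi w p m v

/-- The resistance `r_p(V(v), w)` of order `1 < p < ∞`. -/
noncomputable def rpC (chi : V → Set V) (w : V → ℝ≥0∞) (p : ℝ) (v : V) : ℝ≥0∞ :=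
  (w v ^ p + cpC chi w p v ^ p) ^ (1 / p)

/-- Truncated continued fraction of order `p = ∞`. -/
noncomputable def cInfAux (chi : V → Set V) (w : V → ℝ≥0∞) : ℕ → V → ℝ≥0∞
  | 0, _ => 0
  | m + 1, v =>
      if chi v = ∅ then 0
      else (∑' u : ↥(chi v), (max (w u.1) (cInfAux chi w m u.1))⁻¹)⁻¹

/-- The continued fraction `c_∞(V(v), w)`. -/
noncomputable def cInfC (chi : V → Set V) (w : V → ℝ≥0∞) (v : V) : ℝ≥0∞ :=
  ⨆ m : ℕ, cInfAux chi w m v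

/-- The resistance `r_∞(V(v), w)`. -/
noncomputable def rInfC (chi : V → Set V) (w : V → ℝ≥0∞) (v : V) : ℝ≥0∞ :=
  max (w v) (cInfC chi w v)

end Constants

/-- `γ_0 ⋯ γ_{n-1}` as an element of `[0,∞]`. -/
noncomputable def gamProd (γ : ℤ → ℕ) (n : ℕ) : ℝ≥0∞ :=
  ∏ k ∈ Finset.range n, (γ (k : ℤ) : ℝ≥0∞)

/-- `|λ_1 ⋯ λ_n|` as an element of `[0,∞]`. -/
noncomputable def lamProdPos {𝕜 : Type*} [RCLike 𝕜] (Λ : ℤ → 𝕜) (n : ℕ) : ℝ≥0∞ :=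
  ∏ k ∈ Finset.range n, (‖Λ ((k : ℤ) + 1)‖₊ : ℝ≥0∞)

/-- `|λ_{-n+1} ⋯ λ_0|` as an element of `[0,∞]`. -/
noncomputable def lamProdNeg {𝕜 : Type*} [RCLike 𝕜] (Λ : ℤ → 𝕜) (n : ℕ) : ℝ≥0∞ :=
  ∏ k ∈ Finset.range n, (‖Λ (-(k : ℤ))‖₊ : ℝ≥0∞)

/-!
Let `e_v` be the indicator of `v`. By averaging over levels, the backward orbits of `e_v` can be
assumed constant on each level below `v`, so there is only one candidate: the restrictions of
`levelFun` to the levels. A periodic point `x` with `x(v) ≠ 0` has a periodic sequence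
`(B_λ^n x)(v)`; its level averages are multiples of the values of `levelFun`, hence finitely many
points of the orbit of `x`, averaged over the levels, dominate `levelFun`, which therefore lies in
`X`. This yields the condition on `∏ γ_i ∏ λ_i`. If the tree has a free left end `v`, every level
below an ancestor of `v` that contains `v` is `{v}`, and for the same reason the forward orbit of
`e_v`, which is supported on single ancestors of `v`, sums to a member of `X`.

Conversely, `B_λ` is chaotic as soon as the vectors with both a summable forward and a summable
backward orbit are dense: a bilateral orbit `(z_k)` produces the periodic points `∑_j z_{jN}`, which
tend to `z_0`. If `levelFun` lies in `X`, every `e_v` has a summable backward orbit. Its forward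
orbit is finite when the tree is rooted. When the tree is unrooted without a free left end, the
levels containing `v` get arbitrarily large; the average `y` of `e_u` over such a level is small,
as `p > 1` or `X = c₀(V)`, and `e_v - y` is annihilated by a power of `B_λ`.
-/

/-! ### The chaos criterion -/

theorem exists_dense_range_apply {κ Y Z : Type*} [TopologicalSpace Y] [BaireSpace Y] [Nonempty Y]
    [TopologicalSpace Z] [SecondCountableTopology Z] {F : κ → Y → Z} (hF : ∀ k, Continuous (F k))
    (hmeet : ∀ (U : Set Y) (W : Set Z), IsOpen U → IsOpen W → U.Nonempty → W.Nonempty →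
      ∃ k, (U ∩ F k ⁻¹' W).Nonempty) :
    ∃ y, Dense (Set.range fun k => F k y) := by
  obtain ⟨b, hb_countable, hb_empty, hb⟩ := TopologicalSpace.exists_countable_basis Z
  have hopen : ∀ W ∈ b, IsOpen (⋃ k, F k ⁻¹' W) := fun W hW =>
    isOpen_iUnion fun k => (hb.isOpen hW).preimage (hF k)
  have hdense : ∀ W ∈ b, Dense (⋃ k, F k ⁻¹' W) := by
    refine fun W hW => dense_iff_inter_open.2 fun U hU hU_nonempty => ?_
    have hW_nonempty : W.Nonempty :=
      Set.nonempty_iff_ne_empty.2 fun h => hb_empty (h ▸ hW)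
    obtain ⟨k, y, hyU, hyW⟩ := hmeet U W hU (hb.isOpen hW) hU_nonempty hW_nonempty
    exact ⟨y, hyU, Set.mem_iUnion.2 ⟨k, hyW⟩⟩
  obtain ⟨y, hy⟩ := (dense_biInter_of_isOpen hopen hb_countable hdense).nonempty
  refine ⟨y, hb.dense_iff.2 fun W hW _ => ?_⟩
  obtain ⟨k, hk⟩ := Set.mem_iUnion.1 (Set.mem_iInter₂.1 hy W hW)
  exact ⟨F k y, hk, k, rfl⟩

theorem tendsto_tsum_int_mul {E : Type*} [NormedAddCommGroup E] [CompleteSpace E] {z : ℤ → E}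
    (hz : Summable z) : Tendsto (fun N : ℕ => ∑' j : ℤ, z (j * N)) atTop (𝓝 (z 0)) := by
  rw [Metric.tendsto_atTop]
  intro ε hε
  obtain ⟨s, hs⟩ := hz.tsum_vanishing (Metric.ball_mem_nhds (0 : E) hε)
  refine ⟨s.sup Int.natAbs + 1, fun N hN => ?_⟩
  have hN0 : (N : ℤ) ≠ 0 := by omega
  have hinj : Function.Injective fun j : ℤ => j * (N : ℤ) := mul_left_injective₀ hN0
  have hdisj : Disjoint ((fun j : ℤ => j * (N : ℤ)) '' {0}ᶜ) (s : Set ℤ) := by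
    refine Set.disjoint_left.2 ?_
    rintro _ ⟨j, hj, rfl⟩ hjs
    have hle : (j * (N : ℤ)).natAbs ≤ s.sup Int.natAbs := Finset.le_sup (f := Int.natAbs) hjs
    rw [Int.natAbs_mul, Int.natAbs_natCast] at hle
    have hpos : 0 < j.natAbs := Int.natAbs_pos.2 hj
    nlinarith
  have htail := hs _ hdisj
  rw [tsum_image z hinj.injOn] at htail
  have hsum : Summable fun j : ℤ => z (j * N) := hz.comp_injective hinj
  have hsplit := hsum.tsum_subtype_add_tsum_subtype_compl {0}
  rw [tsum_singleton 0 fun j : ℤ => z (j * N), zero_mul] at hsplit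
  rw [← hsplit, dist_eq_norm, add_sub_cancel_left]
  exact mem_ball_zero_iff.1 htail

section ChaosCriterion

variable {𝕜 : Type*} [RCLike 𝕜] {X : Type*} [NormedAddCommGroup X] [NormedSpace 𝕜 X]

/-- The vectors with unconditionally summable orbit under `T`. -/
def forwardSummable (T : X →L[𝕜] X) : Submodule 𝕜 X where
  carrier := {x | Summable fun n => (T ^ n) x}
  zero_mem' := by simpa only [Set.mem_ofPred_eq, map_zero] using summable_zero
  add_mem' hx hy := by simpa only [Set.mem_ofPred_eq, map_add] using hx.add hy
  smul_mem' a x hx := by simpa only [Set.mem_ofPred_eq, map_smul] using hx.const_smul a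

/-- The vectors with an unconditionally summable backward orbit under `T`, along some choice of
successive preimages. -/
def backwardSummable (T : X →L[𝕜] X) : Submodule 𝕜 X where
  carrier := {x | ∃ s : ℕ → X, s 0 = x ∧ (∀ n, T (s (n + 1)) = s n) ∧ Summable s}
  zero_mem' := ⟨0, rfl, fun _ => map_zero T, summable_zero⟩
  add_mem' := by
    rintro _ _ ⟨s, rfl, hs, hs_sum⟩ ⟨t, rfl, ht, ht_sum⟩
    exact ⟨s + t, rfl, fun n => by simp only [Pi.add_apply, map_add, hs, ht], hs_sum.add ht_sum⟩
  smul_mem' := by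
    rintro a _ ⟨s, rfl, hs, hs_sum⟩
    exact ⟨a • s, rfl, fun n => by simp only [Pi.smul_apply, map_smul, hs], hs_sum.const_smul a⟩

variable {T : X →L[𝕜] X}

theorem mem_forwardSummable {x : X} : x ∈ forwardSummable T ↔ Summable fun n => (T ^ n) x :=
  Iff.rfl

theorem pow_apply_mem_forwardSummable_iff (k : ℕ) {x : X} :
    (T ^ k) x ∈ forwardSummable T ↔ x ∈ forwardSummable T := by
  have hshift : ∀ n, (T ^ n) ((T ^ k) x) = (T ^ (n + k)) x := fun n => by
    rw [pow_add, mul_apply_eq_comp]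
  simp only [mem_forwardSummable, hshift]
  exact summable_nat_add_iff k (f := fun n => (T ^ n) x)

theorem pow_apply_of_backwardOrbit {s : ℕ → X} (hs : ∀ n, T (s (n + 1)) = s n) (n : ℕ) :
    (T ^ n) (s n) = s 0 := by
  induction n with
  | zero => rfl
  | succ n ih => rw [pow_succ, mul_apply_eq_comp, hs, ih]

theorem hypercyclic_of_dense [CompleteSpace X] [TopologicalSpace.SeparableSpace X]
    (hfwd : Dense (forwardSummable T : Set X)) (hbwd : Dense (backwardSummable T : Set X)) :
    Hypercyclic T := by
  refine exists_dense_range_apply (fun n => (T ^ n).continuous) fun U W hU hW hUne hWne => ?_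
  obtain ⟨x, hx, hxU⟩ := hfwd.exists_mem_open hU hUne
  obtain ⟨_, ⟨s, rfl, hs, hs_sum⟩, hyW⟩ := hbwd.exists_mem_open hW hWne
  have hs_zero : Tendsto s atTop (𝓝 0) := hs_sum.tendsto_atTop_zero
  have hx_zero : Tendsto (fun n => (T ^ n) x) atTop (𝓝 0) :=
    (mem_forwardSummable.1 hx).tendsto_atTop_zero
  have hstart : Tendsto (fun n => x + s n) atTop (𝓝 x) := by simpa using hs_zero.const_add x
  have hend : Tendsto (fun n => (T ^ n) (x + s n)) atTop (𝓝 (s 0)) := by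
    simpa only [map_add, pow_apply_of_backwardOrbit hs, zero_add] using hx_zero.add_const (s 0)
  obtain ⟨n, hnU, hnW⟩ :=
    ((hstart.eventually_mem (hU.mem_nhds hxU)).and (hend.eventually_mem (hW.mem_nhds hyW))).exists
  exact ⟨n, x + s n, hnU, hnW⟩

theorem exists_summable_int_orbit {x : X} (hbwd : x ∈ backwardSummable T)
    (hfwd : x ∈ forwardSummable T) :
    ∃ z : ℤ → X, z 0 = x ∧ (∀ k, T (z k) = z (k + 1)) ∧ Summable z := by
  obtain ⟨s, hs0, hs, hs_sum⟩ := hbwd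
  refine ⟨fun k => (T ^ k.toNat) (s (-k).toNat), by simpa using hs0, fun k => ?_, ?_⟩
  · beta_reduce
    rcases lt_or_ge k 0 with hk | hk
    · have hk1 : (-k).toNat = (-(k + 1)).toNat + 1 := by omega
      have hk2 : (k + 1).toNat = k.toNat := by omega
      have hk3 : k.toNat = 0 := by omega
      rw [hk1, hk2, hk3, pow_zero]
      exact hs _
    · have hk1 : (k + 1).toNat = k.toNat + 1 := by omega
      have hk2 : (-(k + 1)).toNat = (-k).toNat := by omega
      rw [hk1, hk2, pow_succ', mul_apply_eq_comp]
  · refine Summable.of_nat_of_neg ?_ ?_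
    · simpa [hs0, mem_forwardSummable] using hfwd
    · simpa using hs_sum

theorem mem_closure_isPeriodicPoint [CompleteSpace X] {x : X} (hbwd : x ∈ backwardSummable T)
    (hfwd : x ∈ forwardSummable T) : x ∈ closure {x | IsPeriodicPoint T x} := by
  obtain ⟨z, rfl, hTz, hz⟩ := exists_summable_int_orbit hbwd hfwd
  refine mem_closure_of_tendsto (tendsto_tsum_int_mul hz) ?_
  filter_upwards [eventually_ge_atTop 1] with N hN
  have hpow : ∀ (n : ℕ) (k : ℤ), (T ^ n) (z k) = z (k + n) := by
    intro n k
    induction n with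
    | zero => simp
    | succ n ih => rw [pow_succ', mul_apply_eq_comp, ih, hTz, Nat.cast_succ, add_assoc]
  have hinj : Function.Injective fun j : ℤ => j * (N : ℤ) := mul_left_injective₀ (by omega)
  refine ⟨N, hN, ?_⟩
  calc (T ^ N) (∑' j : ℤ, z (j * N)) = ∑' j : ℤ, (T ^ N) (z (j * N)) :=
        (T ^ N).map_tsum (hz.comp_injective hinj)
    _ = ∑' j : ℤ, z ((j + 1) * N) := by simp only [hpow, add_one_mul]
    _ = ∑' j : ℤ, z (j * N) := (Equiv.addRight (1 : ℤ)).tsum_eq fun j => z (j * N)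

theorem chaoticOp_of_dense [CompleteSpace X] [TopologicalSpace.SeparableSpace X]
    (h : Dense ((backwardSummable T ⊓ forwardSummable T : Submodule 𝕜 X) : Set X)) :
    ChaoticOp T := by
  refine ⟨hypercyclic_of_dense (h.mono fun _ hx => hx.2) (h.mono fun _ hx => hx.1), ?_⟩
  exact dense_closure.1 (h.mono fun x hx => mem_closure_isPeriodicPoint hx.1 hx.2)

end ChaosCriterion

/-! ### Solid sequence spaces -/

section SequenceSpaces

variable {𝕜 : Type*} [RCLike 𝕜]

/-- The function with the constant value `c n` on the block `A n` for every `n` and the value zero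
off the blocks, which are meant to be pairwise disjoint. -/
noncomputable def stepFun (A : ℕ → Finset V) (c : ℕ → 𝕜) (u : V) : 𝕜 :=
  ∑' n, if u ∈ A n then c n else 0

theorem stepFun_apply_of_mem {A : ℕ → Finset V} (hA : Pairwise (Function.onFun Disjoint A))
    (c : ℕ → 𝕜) {n : ℕ} {u : V} (hu : u ∈ A n) : stepFun A c u = c n := by
  rw [stepFun, tsum_eq_single n fun m hm => if_neg (Finset.disjoint_right.1 (hA hm) hu), if_pos hu]

theorem stepFun_apply_of_forall_notMem {A : ℕ → Finset V} (c : ℕ → 𝕜) {u : V}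
    (hu : ∀ n, u ∉ A n) : stepFun A c u = 0 := by
  simp only [stepFun, hu, if_false, tsum_zero]

theorem norm_sum_ite_le_norm_stepFun {A : ℕ → Finset V}
    (hA : Pairwise (Function.onFun Disjoint A)) (c : ℕ → 𝕜) (t : Finset ℕ) (u : V) :
    ‖∑ n ∈ t, if u ∈ A n then c n else 0‖ ≤ ‖stepFun A c u‖ := by
  by_cases hu : ∃ n ∈ t, u ∈ A n
  · obtain ⟨n, hn, hun⟩ := hu
    have hother : ∀ m ∈ t, m ≠ n → (if u ∈ A m then c m else 0) = 0 := fun m _ hmn =>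
      if_neg (Finset.disjoint_right.1 (hA hmn) hun)
    rw [Finset.sum_eq_single_of_mem n hn hother, if_pos hun, stepFun_apply_of_mem hA c hun]
  · have hzero : ∀ n ∈ t, (if u ∈ A n then c n else 0) = 0 := fun n hn =>
      if_neg fun hun => hu ⟨n, hn, hun⟩
    rw [Finset.sum_eq_zero hzero, norm_zero]
    exact norm_nonneg _

variable {X : Type*} [NormedAddCommGroup X] [NormedSpace 𝕜 X]

/-- `ι` represents `X` as a space of functions on `V` in which coordinates are dominated by the
norm, which contains every function dominated by one of its members, in which the norm is order
continuous, and which contains the indicators of points. -/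
structure IsSolidSequenceSpace (ι : X →ₗ[𝕜] V → 𝕜) : Prop where
  injective : Function.Injective ι
  norm_apply_le (x : X) (v : V) : ‖ι x v‖ ≤ ‖x‖
  mem_range_of_norm_le (x : X) (g : V → 𝕜) :
    (∀ v, ‖g v‖ ≤ ‖ι x v‖) → g ∈ LinearMap.range ι
  exists_finset_norm_le (x : X) (ε : ℝ) : 0 < ε → ∃ F : Finset V, ∀ y : X,
    (∀ v ∈ F, ι y v = 0) → (∀ v, ‖ι y v‖ ≤ ‖ι x v‖) → ‖y‖ ≤ ε
  single_mem_range (v : V) : Pi.single v 1 ∈ LinearMap.range ι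

/-- A solid sequence space that is stable under averaging over disjoint finite blocks, and in which
the averages of large sets of basis vectors are small. -/
structure IsAveragingSpace (ι : X →ₗ[𝕜] V → 𝕜) : Prop extends IsSolidSequenceSpace ι where
  stepFun_average_mem_range (x : X) (A : ℕ → Finset V) :
    Pairwise (Function.onFun Disjoint A) → (∀ n, (A n).Nonempty) →
      stepFun A (fun n => ((A n).card : 𝕜)⁻¹ * ∑ u ∈ A n, ι x u) ∈ LinearMap.range ι
  exists_norm_average_le (ε : ℝ) : 0 < ε → ∃ N : ℕ, ∀ A : Finset V, N ≤ A.card →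
    ∀ y : X, (ι y = fun u => if u ∈ A then (A.card : 𝕜)⁻¹ else 0) → ‖y‖ ≤ ε

namespace IsSolidSequenceSpace

variable {ι : X →ₗ[𝕜] V → 𝕜}

/-- The vector of `X` represented by the indicator of the point `v`. -/
noncomputable def basisVec (hι : IsSolidSequenceSpace ι) (v : V) : X :=
  (hι.single_mem_range v).choose

variable (hι : IsSolidSequenceSpace ι)
include hι

theorem apply_basisVec (v : V) : ι (hι.basisVec v) = Pi.single v 1 :=
  (hι.single_mem_range v).choose_spec

theorem continuous_apply (v : V) : Continuous fun x => ι x v :=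
  AddMonoidHomClass.continuous_of_bound ((LinearMap.proj v).comp ι : X →ₗ[𝕜] 𝕜) 1 fun x => by
    simpa using hι.norm_apply_le x v

theorem mem_range_of_forall_exists_norm_le {α : Type*} (s : Finset α) (x : α → X) {g : V → 𝕜}
    (hg : ∀ v, ∃ i ∈ s, ‖g v‖ ≤ ‖ι (x i) v‖) : g ∈ LinearMap.range ι := by
  have habs : ∀ i, (fun v => ((‖ι (x i) v‖ : ℝ) : 𝕜)) ∈ LinearMap.range ι := fun i =>
    hι.mem_range_of_norm_le (x i) _ fun v => by simp
  obtain ⟨y, hy⟩ := Submodule.sum_mem (LinearMap.range ι) fun i (_ : i ∈ s) => habs i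
  refine hι.mem_range_of_norm_le y g fun v => ?_
  obtain ⟨i, hi, hgi⟩ := hg v
  have hyv : ι y v = ((∑ j ∈ s, ‖ι (x j) v‖ : ℝ) : 𝕜) := by
    rw [hy, Finset.sum_apply, RCLike.ofReal_sum]
  rw [hyv, RCLike.norm_ofReal, abs_of_nonneg (Finset.sum_nonneg fun _ _ => norm_nonneg _)]
  exact hgi.trans (Finset.single_le_sum (f := fun j => ‖ι (x j) v‖) (fun _ _ => norm_nonneg _) hi)

theorem mem_range_of_finite_support {g : V → 𝕜} (hg : g.support.Finite) :
    g ∈ LinearMap.range ι := by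
  refine hι.mem_range_of_forall_exists_norm_le (insert none (hg.toFinset.image some))
    (fun o : Option V => o.elim 0 fun u => g u • hι.basisVec u) fun v => ?_
  by_cases hv : g v = 0
  · exact ⟨none, Finset.mem_insert_self _ _, by simp [hv]⟩
  · exact ⟨some v, by simp [hv], by simp [hι.apply_basisVec]⟩

theorem summable_iff_stepFun_mem_range [CompleteSpace X] {A : ℕ → Finset V}
    (hA : Pairwise (Function.onFun Disjoint A)) {c : ℕ → 𝕜} {s : ℕ → X}
    (hs : ∀ n u, ι (s n) u = if u ∈ A n then c n else 0) :
    Summable s ↔ stepFun A c ∈ LinearMap.range ι := by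
  constructor
  · refine fun hsum => ⟨∑' n, s n, funext fun u => ?_⟩
    have hu := (hsum.hasSum.map ((LinearMap.proj u).comp ι : X →ₗ[𝕜] 𝕜)
      (hι.continuous_apply u)).tsum_eq
    simpa [stepFun, hs] using hu.symm
  · rintro ⟨x, hx⟩
    refine summable_iff_vanishing_norm.2 fun ε hε => ?_
    obtain ⟨F, hF⟩ := hι.exists_finset_norm_le x (ε / 2) (half_pos hε)
    have hmeet : {n | ∃ v ∈ F, v ∈ A n}.Finite := by
      refine (F.finite_toSet.biUnion (t := fun v => {n | v ∈ A n}) fun v _ => ?_).subset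
        fun n ⟨v, hvF, hvn⟩ => Set.mem_biUnion hvF hvn
      refine Set.Subsingleton.finite fun m hm n hn => by_contra fun hmn => ?_
      exact Finset.disjoint_left.1 (hA hmn) hm hn
    refine ⟨hmeet.toFinset, fun t ht => ?_⟩
    have hsum : ∀ v, ι (∑ n ∈ t, s n) v = ∑ n ∈ t, if v ∈ A n then c n else 0 := fun v => by
      simp only [map_sum, Finset.sum_apply, hs]
    refine (hF _ (fun v hv => ?_) fun v => ?_).trans_lt (half_lt_self hε)
    · rw [hsum]
      refine Finset.sum_eq_zero fun n hn => if_neg fun hvn => ?_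
      exact Finset.disjoint_left.1 ht hn (hmeet.mem_toFinset.2 ⟨v, hv, hvn⟩)
    · rw [hsum, hx]
      exact norm_sum_ite_le_norm_stepFun hA c t v

theorem dense_span_basisVec : Dense (Submodule.span 𝕜 (Set.range hι.basisVec) : Set X) := by
  refine Metric.dense_iff.2 fun x ε hε => ?_
  obtain ⟨F, hF⟩ := hι.exists_finset_norm_le x (ε / 2) (half_pos hε)
  refine ⟨∑ v ∈ F, ι x v • hι.basisVec v, ?_, Submodule.sum_mem _ fun v _ =>
    Submodule.smul_mem _ _ (Submodule.subset_span ⟨v, rfl⟩)⟩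
  have hdiff : ∀ v, ι (∑ u ∈ F, ι x u • hι.basisVec u - x) v = if v ∈ F then 0 else -ι x v := by
    intro v
    by_cases hv : v ∈ F <;> simp [hι.apply_basisVec, Pi.single_apply, hv]
  rw [Metric.mem_ball, dist_eq_norm]
  refine (hF _ (fun v hv => ?_) fun v => ?_).trans_lt (half_lt_self hε)
  · rw [hdiff, if_pos hv]
  · rw [hdiff]
    split_ifs <;> simp

theorem dense_of_basisVec_mem_closure {S : Submodule 𝕜 X}
    (hS : ∀ v, hι.basisVec v ∈ closure (S : Set X)) : Dense (S : Set X) := by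
  have hspan : Submodule.span 𝕜 (Set.range hι.basisVec) ≤ S.topologicalClosure :=
    Submodule.span_le.2 (Set.range_subset_iff.2 hS)
  exact dense_closure.1 (hι.dense_span_basisVec.mono hspan)

theorem separableSpace [Countable V] : TopologicalSpace.SeparableSpace X := by
  have hspan := (Set.countable_range hι.basisVec).isSeparable.span (R := 𝕜)
  rw [← TopologicalSpace.isSeparable_univ_iff, ← hι.dense_span_basisVec.closure_eq]
  exact hspan.closure

end IsSolidSequenceSpace

end SequenceSpaces

/-! ### The spaces `ℓ^p(V)` and `c₀(V)` -/

section LpSpace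

variable {𝕜 : Type*} [RCLike 𝕜]

theorem card_mul_norm_average_rpow_le {A : Finset V} (hA : A.Nonempty) (f : V → 𝕜) {p : ℝ}
    (hp : 1 ≤ p) :
    (A.card : ℝ) * ‖(A.card : 𝕜)⁻¹ * ∑ u ∈ A, f u‖ ^ p ≤ ∑ u ∈ A, ‖f u‖ ^ p := by
  have hcard : (0 : ℝ) < A.card := Nat.cast_pos.2 hA.card_pos
  have hnorm : ‖(A.card : 𝕜)⁻¹ * ∑ u ∈ A, f u‖ ≤ ∑ u ∈ A, (A.card : ℝ)⁻¹ * ‖f u‖ := by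
    rw [norm_mul, norm_inv, RCLike.norm_natCast, ← Finset.mul_sum]
    gcongr
    exact norm_sum_le _ _
  have hmean := Real.rpow_arith_mean_le_arith_mean_rpow A (fun _ => (A.card : ℝ)⁻¹)
    (fun u => ‖f u‖) (fun _ _ => by positivity) (by simp [hcard.ne']) (fun _ _ => norm_nonneg _) hp
  calc (A.card : ℝ) * ‖(A.card : 𝕜)⁻¹ * ∑ u ∈ A, f u‖ ^ p
      ≤ A.card * ∑ u ∈ A, (A.card : ℝ)⁻¹ * ‖f u‖ ^ p := by
        gcongr
        exact (Real.rpow_le_rpow (norm_nonneg _) hnorm (by linarith)).trans hmean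
    _ = ∑ u ∈ A, ‖f u‖ ^ p := by
        rw [← Finset.mul_sum, mul_inv_cancel_left₀ hcard.ne']

theorem injective_sigma_val {A : ℕ → Finset V} (hA : Pairwise (Function.onFun Disjoint A)) :
    Function.Injective fun i : Σ n, A n => (i.2 : V) := by
  rintro ⟨m, u, hu⟩ ⟨n, w, hw⟩ (rfl : u = w)
  obtain rfl : m = n := by_contra fun hmn => Finset.disjoint_left.1 (hA hmn) hu hw
  rfl

theorem summable_norm_stepFun_rpow_iff {A : ℕ → Finset V}
    (hA : Pairwise (Function.onFun Disjoint A)) (c : ℕ → 𝕜) {p : ℝ} (hp : 0 < p) :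
    Summable (fun u => ‖stepFun A c u‖ ^ p) ↔ Summable fun n => (A n).card * ‖c n‖ ^ p := by
  have hoff : ∀ u ∉ Set.range fun i : Σ n, A n => (i.2 : V), ‖stepFun A c u‖ ^ p = 0 := by
    intro u hu
    rw [stepFun_apply_of_forall_notMem c fun n hn => hu ⟨⟨n, u, hn⟩, rfl⟩, norm_zero,
      Real.zero_rpow hp.ne']
  have hon : ∀ i : Σ n, A n, ‖stepFun A c i.2‖ ^ p = ‖c i.1‖ ^ p := fun i => by
    rw [stepFun_apply_of_mem hA c i.2.2]
  rw [← (injective_sigma_val hA).summable_iff hoff]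
  simp only [Function.comp_def, hon]
  rw [summable_sigma_of_nonneg fun i => by positivity]
  simp [Summable.of_finite]

namespace IsLpSpaceRep

variable {X : Type*} [NormedAddCommGroup X] [NormedSpace 𝕜 X] {ι : X →ₗ[𝕜] V → 𝕜} {p : ℝ}

theorem mem_range_iff (h : IsLpSpaceRep ι (fun _ => 1) p) (hp : 0 < p) {f : V → 𝕜} :
    f ∈ LinearMap.range ι ↔ Summable fun v => ‖f v‖ ^ p := by
  have hcoe : ∀ v, (‖f v * 1‖₊ : ℝ≥0∞) ^ p = ((‖f v‖₊ ^ p : ℝ≥0) : ℝ≥0∞) := fun v => by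
    rw [mul_one, ENNReal.coe_rpow_of_nonneg _ hp.le]
  rw [← SetLike.mem_coe, LinearMap.coe_range, ← h.2.1 f, lt_top_iff_ne_top, tsum_congr hcoe,
    ENNReal.tsum_coe_ne_top_iff_summable, ← NNReal.summable_coe]
  simp only [NNReal.coe_rpow, coe_nnnorm]

theorem norm_rpow_eq_tsum (h : IsLpSpaceRep ι (fun _ => 1) p) (hp : 0 < p) (x : X) :
    ‖x‖ ^ p = ∑' v, ‖ι x v‖ ^ p := by
  have hnorm : (‖x‖₊ : ℝ≥0∞) ^ p = ∑' v, (‖ι x v‖₊ : ℝ≥0∞) ^ p := by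
    rw [h.2.2 x, one_div, ENNReal.rpow_inv_rpow hp.ne']
    simp only [mul_one]
  have hreal := congrArg ENNReal.toReal hnorm
  rw [ENNReal.tsum_toReal_eq fun v => ENNReal.rpow_ne_top_of_nonneg hp.le ENNReal.coe_ne_top]
    at hreal
  simpa only [← ENNReal.toReal_rpow, ENNReal.coe_toReal, coe_nnnorm] using hreal

theorem summable_norm_rpow (h : IsLpSpaceRep ι (fun _ => 1) p) (hp : 0 < p) (x : X) :
    Summable fun v => ‖ι x v‖ ^ p :=
  (h.mem_range_iff hp).1 ⟨x, rfl⟩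

theorem stepFun_mem_range_iff (h : IsLpSpaceRep ι (fun _ => 1) p) (hp : 0 < p) {A : ℕ → Finset V}
    (hA : Pairwise (Function.onFun Disjoint A)) (c : ℕ → 𝕜) :
    stepFun A c ∈ LinearMap.range ι ↔ Summable fun n => (A n).card * ‖c n‖ ^ p := by
  rw [h.mem_range_iff hp, summable_norm_stepFun_rpow_iff hA c hp]

theorem exists_finset_norm_le (h : IsLpSpaceRep ι (fun _ => 1) p) (hp : 0 < p) (x : X) {ε : ℝ}
    (hε : 0 < ε) : ∃ F : Finset V, ∀ y : X,
      (∀ v ∈ F, ι y v = 0) → (∀ v, ‖ι y v‖ ≤ ‖ι x v‖) → ‖y‖ ≤ ε := by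
  have hx := h.summable_norm_rpow hp x
  obtain ⟨F, hF⟩ := ((tendsto_tsum_compl_atTop_zero fun v => ‖ι x v‖ ^ p).eventually_lt_const
    (Real.rpow_pos_of_pos hε p)).exists
  refine ⟨F, fun y hy hyx => (Real.rpow_le_rpow_iff (norm_nonneg _) hε.le hp).1 ?_⟩
  have hy_sum := h.summable_norm_rpow hp y
  have hsupport : (Function.support fun v => ‖ι y v‖ ^ p) ⊆ {v | v ∉ F} := fun v hv hvF =>
    hv (by simp only [hy v hvF, norm_zero, Real.zero_rpow hp.ne'])
  calc ‖y‖ ^ p = ∑' v : {v // v ∉ F}, ‖ι y v‖ ^ p := by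
        rw [h.norm_rpow_eq_tsum hp]
        exact (tsum_subtype_eq_of_support_subset hsupport).symm
    _ ≤ ∑' v : {v // v ∉ F}, ‖ι x v‖ ^ p :=
        (hy_sum.subtype _).tsum_le_tsum
          (fun v => Real.rpow_le_rpow (norm_nonneg _) (hyx v) hp.le) (hx.subtype _)
    _ ≤ ε ^ p := hF.le

theorem isSolidSequenceSpace (h : IsLpSpaceRep ι (fun _ => 1) p) (hp : 0 < p) :
    IsSolidSequenceSpace ι where
  injective := h.1
  norm_apply_le x v := by
    rw [← Real.rpow_le_rpow_iff (norm_nonneg _) (norm_nonneg _) hp, h.norm_rpow_eq_tsum hp]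
    exact (h.summable_norm_rpow hp x).le_tsum v fun _ _ => by positivity
  mem_range_of_norm_le x g hg := (h.mem_range_iff hp).2 <|
    (h.summable_norm_rpow hp x).of_nonneg_of_le (fun _ => by positivity) fun v =>
      Real.rpow_le_rpow (norm_nonneg _) (hg v) hp.le
  exists_finset_norm_le x _ hε := h.exists_finset_norm_le hp x hε
  single_mem_range v := (h.mem_range_iff hp).2 <| summable_of_ne_finset_zero (s := {v})
    fun u hu => by simp [Finset.notMem_singleton.1 hu, hp.ne']

theorem norm_rpow_of_eq_average (h : IsLpSpaceRep ι (fun _ => 1) p) (hp : 0 < p) {A : Finset V}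
    (hA : A.Nonempty) {y : X} (hy : ι y = fun u => if u ∈ A then (A.card : 𝕜)⁻¹ else 0) :
    ‖y‖ ^ p = (A.card : ℝ) ^ (-(p - 1)) := by
  have hcard : (0 : ℝ) < A.card := Nat.cast_pos.2 hA.card_pos
  have hterm : ∀ u ∈ A, ‖ι y u‖ ^ p = ((A.card : ℝ) ^ p)⁻¹ := fun u hu => by
    rw [hy]
    simp only [hu, if_true]
    rw [norm_inv, RCLike.norm_natCast, Real.inv_rpow hcard.le]
  rw [h.norm_rpow_eq_tsum hp, tsum_eq_sum (s := A) fun u hu => by simp [hy, hu, hp.ne'],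
    Finset.sum_congr rfl hterm, Finset.sum_const, nsmul_eq_mul, neg_sub,
    Real.rpow_sub hcard, Real.rpow_one, div_eq_mul_inv]

theorem isAveragingSpace (h : IsLpSpaceRep ι (fun _ => 1) p) (hp : 1 < p) :
    IsAveragingSpace ι where
  toIsSolidSequenceSpace := h.isSolidSequenceSpace (by positivity)
  stepFun_average_mem_range x A hdisj hne := by
    have hp0 : 0 < p := by positivity
    refine (h.stepFun_mem_range_iff hp0 hdisj _).2 ?_
    have hblocks := ((h.summable_norm_rpow hp0 x).comp_injective (injective_sigma_val hdisj)).sigma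
    refine hblocks.of_nonneg_of_le (fun n => by positivity) fun n => ?_
    refine (card_mul_norm_average_rpow_le (hne n) (ι x) hp.le).trans_eq ?_
    exact (Finset.tsum_subtype (A n) fun u => ‖ι x u‖ ^ p).symm
  exists_norm_average_le ε hε := by
    have hp0 : 0 < p := by positivity
    have hlim : Tendsto (fun N : ℕ => (N : ℝ) ^ (-(p - 1))) atTop (𝓝 0) :=
      (tendsto_rpow_neg_atTop (sub_pos.2 hp)).comp tendsto_natCast_atTop_atTop
    obtain ⟨N, hN⟩ := eventually_atTop.1 (hlim.eventually_lt_const (Real.rpow_pos_of_pos hε p))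
    refine ⟨max N 1, fun A hA y hy => ?_⟩
    rw [← Real.rpow_le_rpow_iff (norm_nonneg _) hε.le hp0,
      h.norm_rpow_of_eq_average hp0 (Finset.card_pos.1 ((le_max_right N 1).trans hA)) hy]
    exact (hN _ ((le_max_left N 1).trans hA)).le

end IsLpSpaceRep

end LpSpace

section C0Space

variable {𝕜 : Type*} [RCLike 𝕜]

theorem exists_mem_norm_average_le {A : Finset V} (hA : A.Nonempty) (f : V → 𝕜) :
    ∃ u ∈ A, ‖(A.card : 𝕜)⁻¹ * ∑ u ∈ A, f u‖ ≤ ‖f u‖ := by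
  have hcard : (0 : ℝ) < A.card := Nat.cast_pos.2 hA.card_pos
  refine Finset.exists_le_of_sum_le hA ?_
  rw [Finset.sum_const, nsmul_eq_mul, norm_mul, norm_inv, RCLike.norm_natCast,
    mul_inv_cancel_left₀ hcard.ne']
  exact norm_sum_le _ _

theorem injective_of_forall_mem {A : ℕ → Finset V} (hA : Pairwise (Function.onFun Disjoint A))
    {u : ℕ → V} (hu : ∀ n, u n ∈ A n) : Function.Injective u := fun m n hmn =>
  by_contra fun hne => Finset.disjoint_left.1 (hA hne) (hu m) (hmn ▸ hu n)

theorem tendsto_stepFun_cofinite_iff {A : ℕ → Finset V}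
    (hA : Pairwise (Function.onFun Disjoint A)) (hne : ∀ n, (A n).Nonempty) (c : ℕ → 𝕜) :
    Tendsto (stepFun A c) cofinite (𝓝 0) ↔ Tendsto c atTop (𝓝 0) := by
  constructor
  · intro h
    choose u hu using hne
    rw [← Nat.cofinite_eq_atTop]
    exact (h.comp (injective_of_forall_mem hA hu).tendsto_cofinite).congr fun n =>
      stepFun_apply_of_mem hA c (hu n)
  · intro h
    rw [← Nat.cofinite_eq_atTop] at h
    refine fun U hU => ((h hU).biUnion fun n _ => (A n).finite_toSet).subset fun u hu => ?_
    by_cases hmem : ∃ n, u ∈ A n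
    · obtain ⟨n, hn⟩ := hmem
      refine Set.mem_biUnion (x := n) (fun hc => hu ?_) hn
      exact Set.mem_preimage.2 ((stepFun_apply_of_mem hA c hn).symm ▸ hc)
    · refine absurd ?_ hu
      rw [Set.mem_preimage, stepFun_apply_of_forall_notMem c (not_exists.1 hmem)]
      exact mem_of_mem_nhds hU

namespace IsC0SpaceRep

variable {X : Type*} [NormedAddCommGroup X] [NormedSpace 𝕜 X] {ι : X →ₗ[𝕜] V → 𝕜}

theorem mem_range_iff (h : IsC0SpaceRep ι fun _ => 1) {f : V → 𝕜} :
    f ∈ LinearMap.range ι ↔ Tendsto f cofinite (𝓝 0) := by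
  rw [← SetLike.mem_coe, LinearMap.coe_range, ← h.2.1 f, Metric.tendsto_nhds]
  simp only [eventually_cofinite, dist_zero_right, not_lt, mul_one, gt_iff_lt]

theorem norm_le_iff (h : IsC0SpaceRep ι fun _ => 1) {x : X} {C : ℝ} (hC : 0 ≤ C) :
    ‖x‖ ≤ C ↔ ∀ v, ‖ι x v‖ ≤ C := by
  lift C to ℝ≥0 using hC
  have hnorm := h.2.2 x
  simp only [mul_one] at hnorm
  simp only [← coe_nnnorm, NNReal.coe_le_coe, ← ENNReal.coe_le_coe, hnorm, iSup_le_iff]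

theorem stepFun_mem_range_iff (h : IsC0SpaceRep ι fun _ => 1) {A : ℕ → Finset V}
    (hA : Pairwise (Function.onFun Disjoint A)) (hne : ∀ n, (A n).Nonempty) (c : ℕ → 𝕜) :
    stepFun A c ∈ LinearMap.range ι ↔ Tendsto c atTop (𝓝 0) := by
  rw [h.mem_range_iff, tendsto_stepFun_cofinite_iff hA hne]

theorem isSolidSequenceSpace (h : IsC0SpaceRep ι fun _ => 1) : IsSolidSequenceSpace ι where
  injective := h.1
  norm_apply_le x v := (h.norm_le_iff (norm_nonneg x)).1 le_rfl v
  mem_range_of_norm_le x g hg := h.mem_range_iff.2 <|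
    squeeze_zero_norm hg (tendsto_zero_iff_norm_tendsto_zero.1 (h.mem_range_iff.1 ⟨x, rfl⟩))
  exists_finset_norm_le x ε hε := by
    have hlarge : {v | ε ≤ ‖ι x v‖}.Finite := by simpa using (h.2.1 (ι x)).2 ⟨x, rfl⟩ ε hε
    refine ⟨hlarge.toFinset, fun y hy hyx => (h.norm_le_iff hε.le).2 fun v => ?_⟩
    rcases le_or_gt ε ‖ι x v‖ with hv | hv
    · rw [hy v (hlarge.mem_toFinset.2 hv), norm_zero]
      exact hε.le
    · exact (hyx v).trans hv.le
  single_mem_range v := h.mem_range_iff.2 <| tendsto_nhds_of_eventually_eq <|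
    (Set.finite_singleton v).subset fun u hu => by_contra fun huv => hu (Pi.single_eq_of_ne huv _)

theorem isAveragingSpace (h : IsC0SpaceRep ι fun _ => 1) : IsAveragingSpace ι where
  toIsSolidSequenceSpace := h.isSolidSequenceSpace
  stepFun_average_mem_range x A hdisj hne := by
    refine (h.stepFun_mem_range_iff hdisj hne _).2 ?_
    choose u hu hle using fun n => exists_mem_norm_average_le (hne n) (ι x)
    have hlim : Tendsto (fun n => ι x (u n)) atTop (𝓝 0) := by
      rw [← Nat.cofinite_eq_atTop]
      exact (h.mem_range_iff.1 ⟨x, rfl⟩).comp (injective_of_forall_mem hdisj hu).tendsto_cofinite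
    exact squeeze_zero_norm hle (tendsto_zero_iff_norm_tendsto_zero.1 hlim)
  exists_norm_average_le ε hε := by
    obtain ⟨N, hN⟩ := exists_nat_gt ε⁻¹
    refine ⟨N, fun A hA y hy => (h.norm_le_iff hε.le).2 fun v => ?_⟩
    have hcard : ε⁻¹ ≤ A.card := hN.le.trans (Nat.cast_le.2 hA)
    rw [hy]
    beta_reduce
    split_ifs
    · rw [norm_inv, RCLike.norm_natCast]
      exact inv_le_of_inv_le₀ hε hcard
    · rw [norm_zero]
      exact hε.le

end IsC0SpaceRep

end C0Space

/-! ### Directed trees and their levels -/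

section Trees

variable {par : V → Option V}

theorem parIter_add (m n : ℕ) (v : V) :
    parIter par (m + n) v = (parIter par m v).bind (parIter par n) := by
  induction m generalizing v with
  | zero => rw [Nat.zero_add]; rfl
  | succ m ih =>
    rw [Nat.succ_add]
    change (par v).bind _ = ((par v).bind _).bind _
    rw [Option.bind_assoc]
    exact congrArg _ (funext ih)

theorem parIter_add_of_eq {m : ℕ} {v w : V} (h : parIter par m v = some w) (n : ℕ) :
    parIter par (m + n) v = parIter par n w := by
  rw [parIter_add, h, Option.bind_some]

theorem parIter_one (v : V) : parIter par 1 v = par v :=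
  Option.bind_fun_some (par v)

theorem parIter_succ_eq_some_iff {n : ℕ} {v w : V} :
    parIter par (n + 1) v = some w ↔ ∃ a, parIter par n v = some a ∧ par a = some w := by
  rw [parIter_add, Option.bind_eq_some_iff]
  simp only [parIter_one]

namespace IsDirectedTree

variable (h : IsDirectedTree par)
include h

theorem eq_of_parIter_eq {m n : ℕ} {v w : V} (hm : parIter par m v = some w)
    (hn : parIter par n v = some w) : m = n := by
  wlog hmn : m ≤ n generalizing m n
  · exact (this hn hm (by omega)).symm
  obtain ⟨d, rfl⟩ := Nat.exists_eq_add_of_le hmn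
  rw [parIter_add_of_eq hm] at hn
  by_contra hd
  exact h.acyclic w d (by omega) hn

theorem iff_of_forall_par {Q : V → Prop} (hQ : ∀ u v, par u = some v → (Q u ↔ Q v)) (u v : V) :
    Q u ↔ Q v := by
  have hiter : ∀ (n : ℕ) (u w : V), parIter par n u = some w → (Q u ↔ Q w) := by
    intro n
    induction n with
    | zero => rintro u _ ⟨⟩; rfl
    | succ n ih =>
      intro u w hw
      obtain ⟨a, ha, haw⟩ := parIter_succ_eq_some_iff.1 hw
      exact (ih u a ha).trans (hQ a w haw)
  obtain ⟨m, n, w, hu, hv⟩ := h.connected u v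
  exact (hiter m u w hu).trans (hiter n v w hv).symm

theorem exists_parIter_eq_none (hroot : Rooted par) (v : V) : ∃ n, parIter par n v = none := by
  obtain ⟨r, hr : par r = none⟩ := hroot
  obtain ⟨m, n, w, hv, hrw⟩ := h.connected v r
  have hrw' : r = w := by
    cases n with
    | zero => exact Option.some.inj hrw
    | succ n => simp [parIter, hr] at hrw
  exact ⟨m + 1, by rw [parIter_add_of_eq hv, parIter_one, ← hrw', hr]⟩

theorem pairwise_disjoint_parIter_toFinset (v : V) :
    Pairwise (Function.onFun Disjoint fun n => (parIter par n v).toFinset) := by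
  refine fun m n hmn => Finset.disjoint_left.2 fun w hm hn => hmn ?_
  exact h.eq_of_parIter_eq (Option.mem_toFinset.1 hm) (Option.mem_toFinset.1 hn)

end IsDirectedTree

theorem parIter_ne_none (h : Unrooted par) (n : ℕ) (v : V) : parIter par n v ≠ none := by
  induction n generalizing v with
  | zero => exact Option.some_ne_none v
  | succ n ih =>
    obtain ⟨w, hw⟩ := Option.ne_none_iff_exists'.1 (h v)
    simpa only [parIter, hw, Option.bind_some] using ih w

/-- The number of vertices of generation `m + n` below a vertex of generation `m`. -/
def levelCard (γ : ℤ → ℕ) (m : ℤ) (n : ℕ) : ℕ :=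
  ∏ i ∈ Finset.range n, γ (m + i)

theorem levelCard_succ (γ : ℤ → ℕ) (m : ℤ) (n : ℕ) :
    levelCard γ m (n + 1) = γ m * levelCard γ (m + 1) n := by
  rw [levelCard, Finset.prod_range_succ', mul_comm, Nat.cast_zero, add_zero]
  congr 1
  refine Finset.prod_congr rfl fun i _ => ?_
  rw [Nat.cast_succ, add_right_comm, add_assoc]

/-- A leafless, locally finite tree, with generations enumerated by `gen`, in which every vertex of
generation `m` has `γ m` children. -/
structure IsSymmetricTree (par : V → Option V) (gen : V → ℤ) (γ : ℤ → ℕ) : Prop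
    extends IsDirectedTree par where
  leafless : Leafless par
  gen_of_par {u v : V} : par u = some v → gen u = gen v + 1
  finite_children (v : V) : (children par v).Finite
  ncard_children (v : V) : (children par v).ncard = γ (gen v)

namespace IsSymmetricTree

variable {gen : V → ℤ} {γ : ℤ → ℕ}

/-- The children of `v`, as a finite set. -/
noncomputable def childFinset (hS : IsSymmetricTree par gen γ) (v : V) : Finset V :=
  (hS.finite_children v).toFinset

/-- The descendants of `v` that lie `n` generations below `v`. -/
noncomputable def level (hS : IsSymmetricTree par gen γ) (v : V) : ℕ → Finset V
  | 0 => {v}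
  | n + 1 => (hS.level v n).biUnion hS.childFinset

variable (hS : IsSymmetricTree par gen γ)
include hS

theorem mem_childFinset {u v : V} : u ∈ hS.childFinset v ↔ par u = some v :=
  Set.Finite.mem_toFinset _

theorem card_childFinset (v : V) : (hS.childFinset v).card = γ (gen v) := by
  rw [← hS.ncard_children, Set.ncard_eq_toFinset_card _ (hS.finite_children v)]
  rfl

theorem childFinset_nonempty (v : V) : (hS.childFinset v).Nonempty :=
  (Set.Finite.toFinset_nonempty _).2 (Set.nonempty_iff_ne_empty.2 (hS.leafless v))

theorem mem_level {u v : V} {n : ℕ} : u ∈ hS.level v n ↔ parIter par n u = some v := by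
  induction n generalizing u with
  | zero => simp [level, parIter]
  | succ n ih =>
    simp only [level, Finset.mem_biUnion, mem_childFinset, ih, parIter, Option.bind_eq_some_iff,
      and_comm]

theorem level_nonempty (v : V) (n : ℕ) : (hS.level v n).Nonempty := by
  induction n with
  | zero => exact Finset.singleton_nonempty v
  | succ n ih => exact ih.biUnion fun u _ => hS.childFinset_nonempty u

theorem pairwise_disjoint_level (v : V) :
    Pairwise (Function.onFun Disjoint (hS.level v)) := by
  refine fun m n hmn => Finset.disjoint_left.2 fun u hm hn => hmn ?_
  exact hS.eq_of_parIter_eq (hS.mem_level.1 hm) (hS.mem_level.1 hn)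

theorem level_subset_level_add {u w : V} {k : ℕ} (h : parIter par k u = some w) (n : ℕ) :
    hS.level u n ⊆ hS.level w (n + k) := fun _ ht =>
  hS.mem_level.2 ((parIter_add_of_eq (hS.mem_level.1 ht) k).trans h)

theorem gen_of_parIter {n : ℕ} {u v : V} (h : parIter par n u = some v) : gen u = gen v + n := by
  induction n generalizing v with
  | zero => rw [Option.some.inj h, Nat.cast_zero, add_zero]
  | succ n ih =>
    obtain ⟨a, ha, hav⟩ := parIter_succ_eq_some_iff.1 h
    rw [ih ha, hS.gen_of_par hav]
    push_cast
    ring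

theorem sum_level_succ {M : Type*} [AddCommMonoid M] (v : V) (n : ℕ) (f : V → M) :
    ∑ u ∈ hS.level v (n + 1), f u = ∑ w ∈ hS.level v n, ∑ u ∈ hS.childFinset w, f u := by
  refine Finset.sum_biUnion fun a _ b _ hab => Finset.disjoint_left.2 fun u hua hub => hab ?_
  rw [mem_childFinset] at hua hub
  exact Option.some.inj (hua.symm.trans hub)

theorem card_level (v : V) (n : ℕ) : (hS.level v n).card = levelCard γ (gen v) n := by
  induction n with
  | zero => rfl
  | succ n ih =>
    have hcard : ∀ w ∈ hS.level v n, ∑ _u ∈ hS.childFinset w, 1 = γ (gen v + n) := fun w hw => by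
      rw [← Finset.card_eq_sum_ones, card_childFinset, hS.gen_of_parIter (hS.mem_level.1 hw)]
    rw [Finset.card_eq_sum_ones, sum_level_succ, Finset.sum_congr rfl hcard, Finset.sum_const,
      smul_eq_mul, ih, levelCard, levelCard, Finset.prod_range_succ]

theorem levelCard_ne_zero (v : V) (n : ℕ) : levelCard γ (gen v) n ≠ 0 := by
  rw [← hS.card_level]
  exact (hS.level_nonempty v n).card_ne_zero

theorem exists_le_card_level (h : ¬ HasFreeLeftEnd par) (v : V) (M : ℕ) :
    ∃ (k : ℕ) (w : V), parIter par k v = some w ∧ M ≤ (hS.level w k).card := by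
  induction M with
  | zero => exact ⟨0, v, rfl, Nat.zero_le _⟩
  | succ M ih =>
    obtain ⟨k, w, hvw, hM⟩ := ih
    simp only [HasFreeLeftEnd, not_exists, not_forall] at h
    obtain ⟨n, hn, z, hwz, hz⟩ := h w
    obtain ⟨j, rfl⟩ := Nat.exists_eq_succ_of_ne_zero (Nat.one_le_iff_ne_zero.1 hn)
    obtain ⟨a, hwa, haz⟩ := parIter_succ_eq_some_iff.1 hwz
    obtain ⟨b, hbz, hba⟩ : ∃ b, par b = some z ∧ b ≠ a := by
      by_contra! hb
      exact hz ⟨a, haz, hb⟩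
    obtain ⟨t, ht⟩ := hS.level_nonempty b (k + j)
    have ht_notMem : t ∉ hS.level w k := fun htw => by
      have hta := hS.level_subset_level_add hwa k htw
      rw [mem_level] at ht hta
      exact hba (Option.some.inj (ht.symm.trans hta))
    have ht_mem : t ∈ hS.level z (k + (j + 1)) :=
      hS.level_subset_level_add ((parIter_one b).trans hbz) (k + j) ht
    refine ⟨k + (j + 1), z, (parIter_add_of_eq hvw _).trans hwz, ?_⟩
    calc M + 1 ≤ (hS.level w k).card + 1 := Nat.succ_le_succ hM
      _ = (insert t (hS.level w k)).card := (Finset.card_insert_of_notMem ht_notMem).symm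
      _ ≤ (hS.level z (k + (j + 1))).card := Finset.card_le_card
          (Finset.insert_subset ht_mem (hS.level_subset_level_add hwz k))

theorem level_eq_singleton {v : V}
    (hv : ∀ n : ℕ, 1 ≤ n → ∀ w : V, parIter par n v = some w → ∃! u : V, u ∈ children par w)
    {n : ℕ} {w : V} (hw : parIter par n v = some w) : hS.level w n = {v} := by
  induction n generalizing w with
  | zero => rw [Option.some.inj hw]; rfl
  | succ n ih =>
    obtain ⟨a, hva, haw⟩ := parIter_succ_eq_some_iff.1 hw
    refine Finset.eq_singleton_iff_unique_mem.2 ⟨hS.mem_level.2 hw, fun u hu => ?_⟩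
    obtain ⟨b, hub, hbw⟩ := parIter_succ_eq_some_iff.1 (hS.mem_level.1 hu)
    obtain rfl : b = a := (hv (n + 1) (Nat.le_add_left 1 n) w hw).unique hbw haw
    exact Finset.mem_singleton.1 (ih hva ▸ hS.mem_level.2 hub)

end IsSymmetricTree

end Trees

/-! ### Symmetric weighted backward shifts -/

section Weights

variable {K : Type*} [Field K]

/-- The product `λ_{m+1} ⋯ λ_{m+n}` of the weights along a path of length `n` going down from
generation `m`. -/
def weightProd (Λ : ℤ → K) (m : ℤ) (n : ℕ) : K :=
  ∏ i ∈ Finset.range n, Λ (m + i + 1)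

/-- The product `λ_{m-n+1} ⋯ λ_m` of the weights along the path of length `n` going up from
generation `m`. -/
def ancestorWeight (Λ : ℤ → K) (m : ℤ) (n : ℕ) : K :=
  ∏ i ∈ Finset.range n, Λ (m - i)

/-- The value on generation `m + n` of the backward orbit of the indicator of a vertex of
generation `m` that spreads evenly over the levels below it. -/
noncomputable def levelCoeff (γ : ℤ → ℕ) (Λ : ℤ → K) (m : ℤ) (n : ℕ) : K :=
  (levelCard γ m n * weightProd Λ m n)⁻¹

theorem weightProd_succ (Λ : ℤ → K) (m : ℤ) (n : ℕ) :
    weightProd Λ m (n + 1) = Λ (m + 1) * weightProd Λ (m + 1) n := by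
  rw [weightProd, Finset.prod_range_succ', mul_comm, Nat.cast_zero, add_zero]
  congr 1
  refine Finset.prod_congr rfl fun i _ => ?_
  rw [Nat.cast_succ, add_right_comm m 1, ← add_assoc]

theorem weightProd_ne_zero {Λ : ℤ → K} (hΛ : ∀ n, Λ n ≠ 0) (m : ℤ) (n : ℕ) :
    weightProd Λ m n ≠ 0 :=
  Finset.prod_ne_zero_iff.2 fun _ _ => hΛ _

theorem weightProd_eq_ancestorWeight (Λ : ℤ → K) (m : ℤ) (n : ℕ) :
    weightProd Λ m n = ancestorWeight Λ (m + n) n := by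
  rw [weightProd, ← Finset.prod_range_reflect]
  refine Finset.prod_congr rfl fun i hi => congrArg Λ ?_
  have := Finset.mem_range.1 hi
  omega

theorem levelCoeff_zero (γ : ℤ → ℕ) (Λ : ℤ → K) (m : ℤ) : levelCoeff γ Λ m 0 = 1 := by
  simp [levelCoeff, levelCard, weightProd]

theorem levelCoeff_succ (γ : ℤ → ℕ) (Λ : ℤ → K) (m : ℤ) (n : ℕ) :
    levelCoeff γ Λ m (n + 1) = (γ m * Λ (m + 1))⁻¹ * levelCoeff γ Λ (m + 1) n := by
  rw [levelCoeff, levelCoeff, levelCard_succ, weightProd_succ, Nat.cast_mul, ← mul_inv]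
  ring

theorem mul_levelCoeff_succ [CharZero K] {γ : ℤ → ℕ} {Λ : ℤ → K} {m : ℤ} {n : ℕ}
    (hγ : γ (m + n) ≠ 0) (hΛ : Λ (m + n + 1) ≠ 0) :
    Λ (m + n + 1) * (γ (m + n) * levelCoeff γ Λ m (n + 1)) = levelCoeff γ Λ m n := by
  have hγ' : (γ (m + n) : K) ≠ 0 := Nat.cast_ne_zero.2 hγ
  rw [levelCoeff, levelCoeff, levelCard, levelCard, weightProd, weightProd,
    Finset.prod_range_succ, Finset.prod_range_succ, Nat.cast_mul, mul_inv, mul_inv, mul_inv,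
    mul_inv]
  field_simp

end Weights

section Shift

variable {𝕜 : Type*} [RCLike 𝕜] {X : Type*} [NormedAddCommGroup X] [NormedSpace 𝕜 X]
  {par : V → Option V} {gen : V → ℤ} {γ : ℤ → ℕ}

/-- `T` is the weighted backward shift with the weight `Λ n` on generation `n`. -/
def IsSymmetricShift (hS : IsSymmetricTree par gen γ) (Λ : ℤ → 𝕜) (ι : X →ₗ[𝕜] V → 𝕜)
    (T : X →L[𝕜] X) : Prop :=
  ∀ (x : X) (v : V), ι (T x) v = Λ (gen v + 1) * ∑ u ∈ hS.childFinset v, ι x u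

/-- The function on the descendants of `v` whose restrictions to the successive levels form a
backward orbit of the indicator of `v`. -/
noncomputable def levelFun (hS : IsSymmetricTree par gen γ) (Λ : ℤ → 𝕜) (v : V) : V → 𝕜 :=
  stepFun (hS.level v) (levelCoeff γ Λ (gen v))

/-- The function on `v` and its ancestors whose restrictions to single vertices form the forward
orbit of the indicator of `v`. -/
noncomputable def ancestorFun (par : V → Option V) (gen : V → ℤ) (Λ : ℤ → 𝕜) (v : V) : V → 𝕜 :=
  stepFun (fun n => (parIter par n v).toFinset) (ancestorWeight Λ (gen v))

variable {hS : IsSymmetricTree par gen γ} {Λ : ℤ → 𝕜} {ι : X →ₗ[𝕜] V → 𝕜} {T : X →L[𝕜] X}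

theorem IsShiftRep.isSymmetricShift (hS : IsSymmetricTree par gen γ) {lam : V → 𝕜}
    (hT : IsShiftRep par lam ι T) (hlam : ∀ v, lam v = Λ (gen v)) : IsSymmetricShift hS Λ ι T := by
  intro x v
  have hsum := hT x v
  rw [← (hS.finite_children v).coe_toFinset] at hsum
  have heq := hsum.unique ((hS.childFinset v).hasSum fun u => lam u * ι x u)
  rw [heq, Finset.mul_sum]
  refine Finset.sum_congr rfl fun u hu => ?_
  rw [hlam, hS.gen_of_par (hS.mem_childFinset.1 hu)]

namespace IsSymmetricShift

variable (hT : IsSymmetricShift hS Λ ι T)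
include hT

theorem pow_apply (n : ℕ) (x : X) (v : V) :
    ι ((T ^ n) x) v = weightProd Λ (gen v) n * ∑ u ∈ hS.level v n, ι x u := by
  induction n generalizing x with
  | zero => simp [weightProd, IsSymmetricTree.level]
  | succ n ih =>
    have hlevel : ∀ w ∈ hS.level v n,
        ι (T x) w = Λ (gen v + n + 1) * ∑ u ∈ hS.childFinset w, ι x u := fun w hw => by
      rw [hT, hS.gen_of_parIter (hS.mem_level.1 hw)]
    rw [pow_succ, mul_apply_eq_comp, ih, Finset.sum_congr rfl hlevel, ← Finset.mul_sum,
      ← hS.sum_level_succ, weightProd, weightProd, Finset.prod_range_succ, mul_assoc]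

theorem pow_basisVec_apply (hι : IsSolidSequenceSpace ι) (n : ℕ) (v w : V) :
    ι ((T ^ n) (hι.basisVec v)) w =
      if w ∈ (parIter par n v).toFinset then ancestorWeight Λ (gen v) n else 0 := by
  have hmem : w ∈ (parIter par n v).toFinset ↔ v ∈ hS.level w n := by
    rw [Option.mem_toFinset, hS.mem_level, Option.mem_def]
  rw [hT.pow_apply, hι.apply_basisVec, Finset.sum_pi_single', if_congr hmem rfl rfl]
  split_ifs with hv
  · rw [mul_one, weightProd_eq_ancestorWeight, hS.gen_of_parIter (hS.mem_level.1 hv)]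
  · rw [mul_zero]

theorem pow_basisVec_eq (hι : IsSolidSequenceSpace ι) {k : ℕ} {u v w : V}
    (hu : parIter par k u = some w) (hv : parIter par k v = some w) :
    (T ^ k) (hι.basisVec u) = (T ^ k) (hι.basisVec v) := by
  refine hι.injective (funext fun z => ?_)
  rw [hT.pow_basisVec_apply, hT.pow_basisVec_apply, hu, hv, hS.gen_of_parIter hu,
    hS.gen_of_parIter hv]

theorem apply_basisVec_of_par (hι : IsSolidSequenceSpace ι) {u v : V} (huv : par u = some v) :
    T (hι.basisVec u) = Λ (gen u) • hι.basisVec v := by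
  refine hι.injective (funext fun w => ?_)
  have hpow := hT.pow_basisVec_apply hι 1 u w
  rw [pow_one, parIter_one, huv] at hpow
  rw [hpow, map_smul, Pi.smul_apply, hι.apply_basisVec, Pi.single_apply]
  simp [ancestorWeight]

/-! ### Necessity -/

theorem stepFun_pow_mem_range (hι : IsAveragingSpace ι) (hΛ : ∀ n, Λ n ≠ 0) (x : X) (v : V) :
    stepFun (hS.level v) (fun n => levelCoeff γ Λ (gen v) n * ι ((T ^ n) x) v)
      ∈ LinearMap.range ι := by
  convert hι.stepFun_average_mem_range x (hS.level v) (hS.pairwise_disjoint_level v)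
    (hS.level_nonempty v) using 2
  funext n
  rw [hT.pow_apply, levelCoeff, hS.card_level, mul_inv, mul_assoc,
    inv_mul_cancel_left₀ (weightProd_ne_zero hΛ _ _)]

theorem levelFun_mem_range_of_pow_eq (hι : IsAveragingSpace ι) (hΛ : ∀ n, Λ n ≠ 0) {x : X} {N : ℕ}
    (hN : 1 ≤ N) (hx : (T ^ N) x = x) {v : V} (hv : ι x v ≠ 0) :
    levelFun hS Λ v ∈ LinearMap.range ι := by
  choose y hy using fun i => hT.stepFun_pow_mem_range hι hΛ ((T ^ i) x) v
  have hdisj := hS.pairwise_disjoint_level v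
  rw [← Submodule.smul_mem_iff _ hv]
  refine hι.mem_range_of_forall_exists_norm_le (Finset.range (N + 1)) y fun u => ?_
  rw [Pi.smul_apply, levelFun]
  by_cases hu : ∃ n, u ∈ hS.level v n
  · obtain ⟨n, hn⟩ := hu
    have hmod : n + (N - n % N) = N * (n / N + 1) := by
      have := Nat.div_add_mod n N
      have := Nat.mod_lt n hN
      rw [mul_add_one]
      omega
    have hperiod : (T ^ n) ((T ^ (N - n % N)) x) = x := by
      rw [← mul_apply_eq_comp, ← pow_add, hmod, pow_mul, FunLike.coe_pow_eq_iterate]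
      exact Function.iterate_fixed hx _
    refine ⟨N - n % N, Finset.mem_range.2 (by omega), le_of_eq ?_⟩
    rw [hy, stepFun_apply_of_mem hdisj _ hn, stepFun_apply_of_mem hdisj _ hn, hperiod, smul_eq_mul,
      mul_comm]
  · refine ⟨0, Finset.mem_range.2 N.succ_pos, ?_⟩
    rw [stepFun_apply_of_forall_notMem _ (not_exists.1 hu), smul_zero, norm_zero]
    exact norm_nonneg _

theorem ancestorFun_mem_range_of_pow_eq (hι : IsSolidSequenceSpace ι) {x : X} {N : ℕ}
    (hN : 1 ≤ N) (hx : (T ^ N) x = x) {v : V} (hv : ι x v ≠ 0)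
    (hfree : ∀ n : ℕ, 1 ≤ n → ∀ w, parIter par n v = some w → ∃! u, u ∈ children par w) :
    ancestorFun par gen Λ v ∈ LinearMap.range ι := by
  rw [← Submodule.smul_mem_iff _ hv]
  refine hι.mem_range_of_forall_exists_norm_le (Finset.range N) (fun i => (T ^ i) x) fun w => ?_
  rw [Pi.smul_apply, ancestorFun]
  by_cases hw : ∃ n, w ∈ (parIter par n v).toFinset
  · obtain ⟨n, hn⟩ := hw
    have hnw : parIter par n v = some w := Option.mem_toFinset.1 hn
    have hperiod : (T ^ (n % N)) x = (T ^ n) x := by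
      simp only [FunLike.coe_pow_eq_iterate] at hx ⊢
      exact Function.IsPeriodicPt.iterate_mod_apply hx n
    refine ⟨n % N, Finset.mem_range.2 (Nat.mod_lt n hN), le_of_eq ?_⟩
    rw [hperiod, hT.pow_apply, hS.level_eq_singleton hfree hnw, Finset.sum_singleton,
      stepFun_apply_of_mem (hS.pairwise_disjoint_parIter_toFinset v) _ hn,
      weightProd_eq_ancestorWeight, ← hS.gen_of_parIter hnw, smul_eq_mul, mul_comm]
  · refine ⟨0, Finset.mem_range.2 hN, ?_⟩
    rw [stepFun_apply_of_forall_notMem _ (not_exists.1 hw), smul_zero, norm_zero]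
    exact norm_nonneg _

end IsSymmetricShift

theorem IsSolidSequenceSpace.exists_isPeriodicPoint_apply_ne_zero (hι : IsSolidSequenceSpace ι)
    (h : ChaoticOp T) (v : V) : ∃ x, IsPeriodicPoint T x ∧ ι x v ≠ 0 := by
  have hopen : IsOpen {x | ι x v ≠ 0} := isOpen_ne.preimage (hι.continuous_apply v)
  have hnonempty : {x | ι x v ≠ 0}.Nonempty := ⟨hι.basisVec v, by simp [hι.apply_basisVec]⟩
  exact h.2.exists_mem_open hopen hnonempty

/-! ### Change of vertex -/

theorem levelFun_apply_of_par (hΛ : ∀ n, Λ n ≠ 0) {v w : V} (hvw : par v = some w) {n : ℕ} {u : V}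
    (hu : u ∈ hS.level v n) :
    levelFun hS Λ v u = γ (gen w) * Λ (gen w + 1) * levelFun hS Λ w u := by
  have hγ : (γ (gen w) : 𝕜) ≠ 0 := by
    rw [Nat.cast_ne_zero, ← hS.card_childFinset]
    exact (hS.childFinset_nonempty w).card_ne_zero
  have huw := hS.level_subset_level_add ((parIter_one v).trans hvw) n hu
  rw [levelFun, levelFun, stepFun_apply_of_mem (hS.pairwise_disjoint_level v) _ hu,
    stepFun_apply_of_mem (hS.pairwise_disjoint_level w) _ huw, levelCoeff_succ,
    hS.gen_of_par hvw, mul_inv_cancel_left₀ (mul_ne_zero hγ (hΛ _))]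

theorem sum_level_levelFun_of_par {v w : V} (hvw : par v = some w) (n : ℕ) :
    ∑ u ∈ hS.level w (n + 1), levelFun hS Λ v u = (weightProd Λ (gen v) n)⁻¹ := by
  have hsub : ∀ m, hS.level v m ⊆ hS.level w (m + 1) :=
    hS.level_subset_level_add ((parIter_one v).trans hvw)
  have hoff : ∀ u ∈ hS.level w (n + 1), u ∉ hS.level v n → levelFun hS Λ v u = 0 :=
    fun u hu hun => stepFun_apply_of_forall_notMem _ fun m hum => by
      have hmn := hS.eq_of_parIter_eq (hS.mem_level.1 hu) (hS.mem_level.1 (hsub m hum))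
      exact hun (Nat.succ_injective hmn ▸ hum)
  have hon : ∀ u ∈ hS.level v n, levelFun hS Λ v u = levelCoeff γ Λ (gen v) n := fun u hu =>
    stepFun_apply_of_mem (hS.pairwise_disjoint_level v) _ hu
  rw [← Finset.sum_subset (hsub n) hoff, Finset.sum_congr rfl hon, Finset.sum_const, nsmul_eq_mul,
    hS.card_level, levelCoeff, mul_inv,
    mul_inv_cancel_left₀ (Nat.cast_ne_zero.2 (hS.levelCard_ne_zero v n))]

theorem levelFun_mem_range_of_par (hι : IsAveragingSpace ι) (hΛ : ∀ n, Λ n ≠ 0) {v w : V}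
    (hvw : par v = some w) (hv : levelFun hS Λ v ∈ LinearMap.range ι) :
    levelFun hS Λ w ∈ LinearMap.range ι := by
  obtain ⟨y, hy⟩ := hv
  obtain ⟨z, hz⟩ := hι.stepFun_average_mem_range y (hS.level w) (hS.pairwise_disjoint_level w)
    (hS.level_nonempty w)
  have haverage : ∀ n, ((hS.level w (n + 1)).card : 𝕜)⁻¹ * ∑ u ∈ hS.level w (n + 1), ι y u =
      Λ (gen w + 1) * levelCoeff γ Λ (gen w) (n + 1) := fun n => by
    rw [hy, sum_level_levelFun_of_par hvw, hS.card_level, levelCoeff, weightProd_succ,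
      hS.gen_of_par hvw, mul_inv, mul_inv, mul_left_comm (Λ _), mul_inv_cancel_left₀ (hΛ _)]
  refine hι.mem_range_of_forall_exists_norm_le
    {hι.basisVec w, (Λ (gen w + 1))⁻¹ • z} id fun u => ?_
  have hdisj := hS.pairwise_disjoint_level w
  by_cases hu : ∃ n, u ∈ hS.level w n
  · obtain ⟨n | n, hn⟩ := hu
    · refine ⟨hι.basisVec w, by simp, le_of_eq ?_⟩
      obtain rfl := Finset.mem_singleton.1 hn
      rw [levelFun, stepFun_apply_of_mem hdisj _ hn, levelCoeff_zero, id, hι.apply_basisVec,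
        Pi.single_eq_same]
    · refine ⟨(Λ (gen w + 1))⁻¹ • z, by simp, le_of_eq ?_⟩
      rw [levelFun, stepFun_apply_of_mem hdisj _ hn, id, map_smul, Pi.smul_apply, hz,
        stepFun_apply_of_mem hdisj _ hn, haverage, smul_eq_mul, inv_mul_cancel_left₀ (hΛ _)]
  · refine ⟨hι.basisVec w, by simp, ?_⟩
    rw [levelFun, stepFun_apply_of_forall_notMem _ (not_exists.1 hu), norm_zero]
    exact norm_nonneg _

theorem levelFun_mem_range_iff (hι : IsAveragingSpace ι) (hΛ : ∀ n, Λ n ≠ 0) (u v : V) :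
    levelFun hS Λ u ∈ LinearMap.range ι ↔ levelFun hS Λ v ∈ LinearMap.range ι := by
  refine hS.iff_of_forall_par (Q := fun v => levelFun hS Λ v ∈ LinearMap.range ι)
    (fun v w hvw => ⟨levelFun_mem_range_of_par hι hΛ hvw, ?_⟩) u v
  rintro ⟨x, hx⟩
  refine hι.mem_range_of_norm_le (((γ (gen w) : 𝕜) * Λ (gen w + 1)) • x) _ fun u => ?_
  rw [map_smul, Pi.smul_apply, hx, smul_eq_mul]
  by_cases hu : ∃ n, u ∈ hS.level v n
  · obtain ⟨n, hn⟩ := hu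
    rw [levelFun_apply_of_par hΛ hvw hn]
  · rw [levelFun, stepFun_apply_of_forall_notMem _ (not_exists.1 hu), norm_zero]
    exact norm_nonneg _

theorem IsSolidSequenceSpace.chaoticOp_of_mem_closure [Countable V] [CompleteSpace X]
    (hι : IsSolidSequenceSpace ι)
    (h : ∀ v, hι.basisVec v ∈
      closure ((backwardSummable T ⊓ forwardSummable T : Submodule 𝕜 X) : Set X)) :
    ChaoticOp T := by
  have := hι.separableSpace
  exact chaoticOp_of_dense (hι.dense_of_basisVec_mem_closure h)

namespace IsSymmetricShift

variable (hT : IsSymmetricShift hS Λ ι T)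
include hT

theorem basisVec_mem_forwardSummable_iff (hι : IsSolidSequenceSpace ι) (hΛ : ∀ n, Λ n ≠ 0)
    (u v : V) : hι.basisVec u ∈ forwardSummable T ↔ hι.basisVec v ∈ forwardSummable T := by
  refine hS.iff_of_forall_par (Q := fun v => hι.basisVec v ∈ forwardSummable T)
    (fun u v huv => ?_) u v
  rw [← pow_apply_mem_forwardSummable_iff 1, pow_one, hT.apply_basisVec_of_par hι huv,
    Submodule.smul_mem_iff _ (hΛ _)]

theorem basisVec_mem_forwardSummable_iff_ancestorFun [CompleteSpace X]
    (hι : IsSolidSequenceSpace ι) (v : V) :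
    hι.basisVec v ∈ forwardSummable T ↔ ancestorFun par gen Λ v ∈ LinearMap.range ι :=
  hι.summable_iff_stepFun_mem_range (hS.pairwise_disjoint_parIter_toFinset v) fun n w =>
    hT.pow_basisVec_apply hι n v w

theorem ancestorFun_mem_range_iff [CompleteSpace X] (hι : IsSolidSequenceSpace ι)
    (hΛ : ∀ n, Λ n ≠ 0) (u v : V) :
    ancestorFun par gen Λ u ∈ LinearMap.range ι ↔ ancestorFun par gen Λ v ∈ LinearMap.range ι := by
  rw [← hT.basisVec_mem_forwardSummable_iff_ancestorFun hι,
    hT.basisVec_mem_forwardSummable_iff hι hΛ u v,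
    hT.basisVec_mem_forwardSummable_iff_ancestorFun hι]

/-! ### Sufficiency -/

theorem basisVec_mem_forwardSummable_of_rooted (hι : IsSolidSequenceSpace ι) (hroot : Rooted par)
    (v : V) : hι.basisVec v ∈ forwardSummable T := by
  obtain ⟨n, hn⟩ := hS.exists_parIter_eq_none hroot v
  have hzero : (T ^ n) (hι.basisVec v) = 0 := hι.injective <| funext fun w => by
    rw [hT.pow_basisVec_apply, hn, map_zero]
    rfl
  rw [← pow_apply_mem_forwardSummable_iff n, hzero]
  exact zero_mem _

theorem basisVec_mem_backwardSummable [CompleteSpace X] (hι : IsSolidSequenceSpace ι)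
    (hΛ : ∀ n, Λ n ≠ 0) {v : V} (hv : levelFun hS Λ v ∈ LinearMap.range ι) :
    hι.basisVec v ∈ backwardSummable T := by
  have hs : ∀ n, (fun u => if u ∈ hS.level v n then levelCoeff γ Λ (gen v) n else 0)
      ∈ LinearMap.range ι := fun n =>
    hι.mem_range_of_finite_support <| (hS.level v n).finite_toSet.subset fun u hu =>
      by_contra fun hun => hu (if_neg hun)
  choose s hs using hs
  simp only [funext_iff] at hs
  refine ⟨s, hι.injective ?_, fun n => hι.injective (funext fun w => ?_),
    (hι.summable_iff_stepFun_mem_range (hS.pairwise_disjoint_level v) fun n u => by rw [hs]).2 hv⟩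
  · funext u
    rw [hs, hι.apply_basisVec, levelCoeff_zero, Pi.single_apply]
    exact if_congr Finset.mem_singleton rfl rfl
  · have hchild : ∀ u ∈ hS.childFinset w, ι (s (n + 1)) u =
        if w ∈ hS.level v n then levelCoeff γ Λ (gen v) (n + 1) else 0 := fun u hu => by
      have hiff : u ∈ hS.level v (n + 1) ↔ w ∈ hS.level v n := by
        rw [hS.mem_level, hS.mem_level, parIter, hS.mem_childFinset.1 hu, Option.bind_some]
      rw [hs, if_congr hiff rfl rfl]
    rw [hT, Finset.sum_congr rfl hchild, Finset.sum_const, hS.card_childFinset, nsmul_eq_mul, hs]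
    split_ifs with hw
    · have hγ : γ (gen w) ≠ 0 := hS.card_childFinset w ▸ (hS.childFinset_nonempty w).card_ne_zero
      rw [hS.gen_of_parIter (hS.mem_level.1 hw)] at hγ ⊢
      exact mul_levelCoeff_succ hγ (hΛ _)
    · rw [mul_zero, mul_zero]

theorem basisVec_mem_closure_of_not_hasFreeLeftEnd (hι : IsAveragingSpace ι)
    (hfree : ¬ HasFreeLeftEnd par) (hbwd : ∀ v, hι.basisVec v ∈ backwardSummable T) (v : V) :
    hι.basisVec v ∈
      closure ((backwardSummable T ⊓ forwardSummable T : Submodule 𝕜 X) : Set X) := by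
  refine Metric.mem_closure_iff.2 fun ε hε => ?_
  obtain ⟨N, hN⟩ := hι.exists_norm_average_le (ε / 2) (half_pos hε)
  obtain ⟨k, w, hvw, hcard⟩ := hS.exists_le_card_level hfree v N
  set A := hS.level w k
  have hA : (A.card : 𝕜) ≠ 0 := Nat.cast_ne_zero.2 (hS.level_nonempty w k).card_ne_zero
  let y := (A.card : 𝕜)⁻¹ • ∑ u ∈ A, hι.basisVec u
  have hy : ι y = fun u => if u ∈ A then (A.card : 𝕜)⁻¹ else 0 := by
    funext u
    simp [y, hι.apply_basisVec, Pi.single_apply]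
  have hTy : (T ^ k) y = (T ^ k) (hι.basisVec v) := by
    have hsame : ∀ u ∈ A, (T ^ k) (hι.basisVec u) = (T ^ k) (hι.basisVec v) := fun u hu =>
      hT.pow_basisVec_eq hι.toIsSolidSequenceSpace (hS.mem_level.1 hu) hvw
    rw [map_smul, map_sum, Finset.sum_congr rfl hsame, Finset.sum_const, ← Nat.cast_smul_eq_nsmul 𝕜,
      inv_smul_smul₀ hA]
  refine ⟨hι.basisVec v - y, ⟨?_, ?_⟩, ?_⟩
  · exact sub_mem (hbwd v) (Submodule.smul_mem _ _ (Submodule.sum_mem _ fun u _ => hbwd u))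
  · change hι.basisVec v - y ∈ forwardSummable T
    rw [← pow_apply_mem_forwardSummable_iff k, map_sub, hTy, sub_self]
    exact zero_mem _
  · rw [dist_eq_norm, sub_sub_cancel]
    exact (hN A hcard y hy).trans_lt (half_lt_self hε)

theorem levelFun_mem_range_of_chaoticOp (hι : IsAveragingSpace ι) (hΛ : ∀ n, Λ n ≠ 0)
    (h : ChaoticOp T) (v : V) : levelFun hS Λ v ∈ LinearMap.range ι := by
  obtain ⟨x, ⟨N, hN, hx⟩, hxv⟩ := hι.exists_isPeriodicPoint_apply_ne_zero h v
  exact hT.levelFun_mem_range_of_pow_eq hι hΛ hN hx hxv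

theorem ancestorFun_mem_range_of_chaoticOp [CompleteSpace X] (hι : IsSolidSequenceSpace ι)
    (hΛ : ∀ n, Λ n ≠ 0) (hfree : HasFreeLeftEnd par) (h : ChaoticOp T) (v : V) :
    ancestorFun par gen Λ v ∈ LinearMap.range ι := by
  obtain ⟨u, hu⟩ := hfree
  obtain ⟨x, ⟨N, hN, hx⟩, hxu⟩ := hι.exists_isPeriodicPoint_apply_ne_zero h u
  exact (hT.ancestorFun_mem_range_iff hι hΛ u v).1
    (hT.ancestorFun_mem_range_of_pow_eq hι hN hx hxu hu)

theorem chaoticOp_iff_levelFun_mem_range [CompleteSpace X] (hι : IsAveragingSpace ι)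
    (hΛ : ∀ n, Λ n ≠ 0) (hcase : Rooted par ∨ ¬ HasFreeLeftEnd par) (v : V) :
    ChaoticOp T ↔ levelFun hS Λ v ∈ LinearMap.range ι := by
  refine ⟨fun h => hT.levelFun_mem_range_of_chaoticOp hι hΛ h v, fun hv => ?_⟩
  have hbwd : ∀ u, hι.basisVec u ∈ backwardSummable T := fun u =>
    hT.basisVec_mem_backwardSummable hι.toIsSolidSequenceSpace hΛ
      ((levelFun_mem_range_iff hι hΛ u v).2 hv)
  have := hS.countable
  refine hι.chaoticOp_of_mem_closure fun u => ?_
  rcases hcase with hroot | hfree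
  · exact subset_closure ⟨hbwd u, hT.basisVec_mem_forwardSummable_of_rooted _ hroot u⟩
  · exact hT.basisVec_mem_closure_of_not_hasFreeLeftEnd hι hfree hbwd u

theorem chaoticOp_iff_of_hasFreeLeftEnd [CompleteSpace X] (hι : IsAveragingSpace ι)
    (hΛ : ∀ n, Λ n ≠ 0) (hfree : HasFreeLeftEnd par) (v : V) :
    ChaoticOp T ↔
      levelFun hS Λ v ∈ LinearMap.range ι ∧ ancestorFun par gen Λ v ∈ LinearMap.range ι := by
  have hι' := hι.toIsSolidSequenceSpace
  refine ⟨fun h => ⟨hT.levelFun_mem_range_of_chaoticOp hι hΛ h v,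
    hT.ancestorFun_mem_range_of_chaoticOp hι' hΛ hfree h v⟩, fun ⟨hlevel, hancestor⟩ => ?_⟩
  have := hS.countable
  refine hι'.chaoticOp_of_mem_closure fun u => subset_closure ⟨?_, ?_⟩
  · exact hT.basisVec_mem_backwardSummable hι' hΛ ((levelFun_mem_range_iff hι hΛ u v).2 hlevel)
  · exact (hT.basisVec_mem_forwardSummable_iff_ancestorFun hι' u).2
      ((hT.ancestorFun_mem_range_iff hι' hΛ u v).2 hancestor)

end IsSymmetricShift

end Shift

/-! ### Conditions in terms of `γ` and `λ` -/

section Conditions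

variable {𝕜 : Type*} [RCLike 𝕜] {γ : ℤ → ℕ} {Λ : ℤ → 𝕜} {p : ℝ}

theorem gamProd_eq_coe (γ : ℤ → ℕ) (n : ℕ) : gamProd γ n = ((levelCard γ 0 n : ℝ≥0) : ℝ≥0∞) := by
  simp [gamProd, levelCard]

theorem lamProdPos_eq_coe (Λ : ℤ → 𝕜) (n : ℕ) :
    lamProdPos Λ n = (‖weightProd Λ 0 n‖₊ : ℝ≥0∞) := by
  simp [lamProdPos, weightProd, nnnorm_prod]

theorem lamProdNeg_eq_coe (Λ : ℤ → 𝕜) (n : ℕ) :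
    lamProdNeg Λ n = (‖ancestorWeight Λ 0 n‖₊ : ℝ≥0∞) := by
  simp [lamProdNeg, ancestorWeight, nnnorm_prod]

theorem nnnorm_levelCoeff (γ : ℤ → ℕ) (Λ : ℤ → 𝕜) (m : ℤ) (n : ℕ) :
    ‖levelCoeff γ Λ m n‖₊ = ((levelCard γ m n : ℝ≥0) * ‖weightProd Λ m n‖₊)⁻¹ := by
  rw [levelCoeff, nnnorm_inv, nnnorm_mul, RCLike.nnnorm_natCast]

theorem tsum_coe_succ_lt_top_iff (a : ℕ → ℝ≥0) :
    (∑' n : ℕ, (a (n + 1) : ℝ≥0∞)) < ⊤ ↔ Summable fun n => (a n : ℝ) := by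
  rw [lt_top_iff_ne_top, ENNReal.tsum_coe_ne_top_iff_summable, NNReal.summable_coe,
    NNReal.summable_nat_add_iff 1]

theorem inv_gamProd_mul_lamProdPos_rpow (hp : p ≠ 0) (hΛ : ∀ n, Λ n ≠ 0) {n : ℕ}
    (hγ : levelCard γ 0 n ≠ 0) :
    (gamProd γ n ^ (p / conjExp p) * lamProdPos Λ n ^ p)⁻¹ =
      ((levelCard γ 0 n * ‖levelCoeff γ Λ 0 n‖₊ ^ p : ℝ≥0) : ℝ≥0∞) := by
  have hcard : (levelCard γ 0 n : ℝ≥0) ≠ 0 := Nat.cast_ne_zero.2 hγ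
  have hweight : ‖weightProd Λ 0 n‖₊ ≠ 0 := nnnorm_ne_zero_iff.2 (weightProd_ne_zero hΛ 0 n)
  have hconj : p / conjExp p = p - 1 := div_div_cancel₀ hp
  rw [gamProd_eq_coe, lamProdPos_eq_coe, ← ENNReal.coe_rpow_of_ne_zero hcard,
    ← ENNReal.coe_rpow_of_ne_zero hweight, ← ENNReal.coe_mul, ← ENNReal.coe_inv
      (mul_ne_zero (NNReal.rpow_pos hcard.bot_lt).ne' (NNReal.rpow_pos hweight.bot_lt).ne'),
    hconj, nnnorm_levelCoeff, NNReal.inv_rpow, NNReal.mul_rpow, NNReal.rpow_sub_one hcard,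
    mul_inv, mul_inv, inv_div, div_eq_mul_inv, mul_assoc]

theorem tsum_inv_gamProd_mul_lamProdPos_lt_top_iff (hp : p ≠ 0) (hΛ : ∀ n, Λ n ≠ 0)
    (hγ : ∀ n, levelCard γ 0 n ≠ 0) :
    (∑' n : ℕ, (gamProd γ (n + 1) ^ (p / conjExp p) * lamProdPos Λ (n + 1) ^ p)⁻¹) < ⊤ ↔
      Summable fun n => levelCard γ 0 n * ‖levelCoeff γ Λ 0 n‖ ^ p := by
  simp only [inv_gamProd_mul_lamProdPos_rpow hp hΛ (hγ _)]
  rw [tsum_coe_succ_lt_top_iff fun n => levelCard γ 0 n * ‖levelCoeff γ Λ 0 n‖₊ ^ p]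
  simp only [NNReal.coe_mul, NNReal.coe_natCast, NNReal.coe_rpow, coe_nnnorm]

theorem tsum_lamProdNeg_rpow_lt_top_iff (hp : 0 ≤ p) (Λ : ℤ → 𝕜) :
    (∑' n : ℕ, lamProdNeg Λ (n + 1) ^ p) < ⊤ ↔
      Summable fun n => ‖ancestorWeight Λ 0 n‖ ^ p := by
  simp only [lamProdNeg_eq_coe, ← ENNReal.coe_rpow_of_nonneg _ hp]
  rw [tsum_coe_succ_lt_top_iff fun n => ‖ancestorWeight Λ 0 n‖₊ ^ p]
  simp only [NNReal.coe_rpow, coe_nnnorm]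

theorem tendsto_coe_nnnorm_zero_iff {α : Type*} {l : Filter α} {f : α → 𝕜} :
    Tendsto (fun a => (‖f a‖₊ : ℝ≥0∞)) l (𝓝 0) ↔ Tendsto f l (𝓝 0) := by
  simpa only [enorm_eq_nnnorm] using tendsto_zero_iff_enorm_tendsto_zero.symm

theorem tendsto_gamProd_mul_lamProdPos_top_iff (hΛ : ∀ n, Λ n ≠ 0)
    (hγ : ∀ n, levelCard γ 0 n ≠ 0) :
    Tendsto (fun n => gamProd γ n * lamProdPos Λ n) atTop (𝓝 ⊤) ↔
      Tendsto (levelCoeff γ Λ 0) atTop (𝓝 0) := by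
  rw [← tendsto_coe_nnnorm_zero_iff, ← tendsto_inv_iff, ENNReal.inv_top]
  refine tendsto_congr fun n => ?_
  rw [gamProd_eq_coe, lamProdPos_eq_coe, nnnorm_levelCoeff, ← ENNReal.coe_mul, ENNReal.coe_inv
    (mul_ne_zero (Nat.cast_ne_zero.2 (hγ n)) (nnnorm_ne_zero_iff.2 (weightProd_ne_zero hΛ 0 n)))]

theorem tendsto_lamProdNeg_zero_iff (Λ : ℤ → 𝕜) :
    Tendsto (fun n => lamProdNeg Λ n) atTop (𝓝 0) ↔
      Tendsto (ancestorWeight Λ 0) atTop (𝓝 0) := by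
  simp only [lamProdNeg_eq_coe, tendsto_coe_nnnorm_zero_iff]

variable {X : Type*} [NormedAddCommGroup X] [NormedSpace 𝕜 X] {ι : X →ₗ[𝕜] V → 𝕜}
  {par : V → Option V} {gen : V → ℤ}

theorem IsLpSpaceRep.levelFun_mem_range_iff (h : IsLpSpaceRep ι (fun _ => 1) p) (hp : 0 < p)
    (hS : IsSymmetricTree par gen γ) (hΛ : ∀ n, Λ n ≠ 0) {v₀ : V} (hv₀ : gen v₀ = 0) :
    levelFun hS Λ v₀ ∈ LinearMap.range ι ↔
      (∑' n : ℕ, (gamProd γ (n + 1) ^ (p / conjExp p) * lamProdPos Λ (n + 1) ^ p)⁻¹) < ⊤ := by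
  rw [levelFun, h.stepFun_mem_range_iff hp (hS.pairwise_disjoint_level v₀),
    tsum_inv_gamProd_mul_lamProdPos_lt_top_iff hp.ne' hΛ (hv₀ ▸ hS.levelCard_ne_zero v₀)]
  simp only [hS.card_level, hv₀]

theorem IsLpSpaceRep.ancestorFun_mem_range_iff (h : IsLpSpaceRep ι (fun _ => 1) p) (hp : 0 < p)
    (hS : IsDirectedTree par) (hunrooted : Unrooted par) (Λ : ℤ → 𝕜) {v₀ : V} (hv₀ : gen v₀ = 0) :
    ancestorFun par gen Λ v₀ ∈ LinearMap.range ι ↔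
      (∑' n : ℕ, lamProdNeg Λ (n + 1) ^ p) < ⊤ := by
  have hcard : ∀ n, (parIter par n v₀).toFinset.card = 1 := fun n => by
    obtain ⟨w, hw⟩ := Option.ne_none_iff_exists'.1 (parIter_ne_none hunrooted n v₀)
    rw [hw, Option.toFinset_some, Finset.card_singleton]
  rw [ancestorFun, h.stepFun_mem_range_iff hp (hS.pairwise_disjoint_parIter_toFinset v₀),
    tsum_lamProdNeg_rpow_lt_top_iff hp.le, hv₀]
  simp only [hcard, Nat.cast_one, one_mul]

theorem IsC0SpaceRep.levelFun_mem_range_iff (h : IsC0SpaceRep ι fun _ => 1)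
    (hS : IsSymmetricTree par gen γ) (hΛ : ∀ n, Λ n ≠ 0) {v₀ : V} (hv₀ : gen v₀ = 0) :
    levelFun hS Λ v₀ ∈ LinearMap.range ι ↔
      Tendsto (fun n => gamProd γ n * lamProdPos Λ n) atTop (𝓝 ⊤) := by
  rw [levelFun, h.stepFun_mem_range_iff (hS.pairwise_disjoint_level v₀) (hS.level_nonempty v₀),
    tendsto_gamProd_mul_lamProdPos_top_iff hΛ (hv₀ ▸ hS.levelCard_ne_zero v₀), hv₀]

theorem IsC0SpaceRep.ancestorFun_mem_range_iff (h : IsC0SpaceRep ι fun _ => 1)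
    (hS : IsDirectedTree par) (hunrooted : Unrooted par) (Λ : ℤ → 𝕜) {v₀ : V} (hv₀ : gen v₀ = 0) :
    ancestorFun par gen Λ v₀ ∈ LinearMap.range ι ↔
      Tendsto (fun n => lamProdNeg Λ n) atTop (𝓝 0) := by
  have hne : ∀ n, (parIter par n v₀).toFinset.Nonempty := fun n => by
    obtain ⟨w, hw⟩ := Option.ne_none_iff_exists'.1 (parIter_ne_none hunrooted n v₀)
    exact ⟨w, Option.mem_toFinset.2 hw⟩
  rw [ancestorFun, h.stepFun_mem_range_iff (hS.pairwise_disjoint_parIter_toFinset v₀) hne,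
    tendsto_lamProdNeg_zero_iff, hv₀]

end Conditions

/-- Theorem 9.1 / `t-symsym`: characterization of chaos for symmetric
weighted backward shifts on leafless symmetric trees, on `X = ℓ^p(V)` (`1 < p < ∞`) and on
`X = c₀(V)`; part (a) for rooted trees or unrooted trees without a free left end, part (b)
for unrooted trees with a free left end. -/
theorem statement16
    {𝕜 : Type*} [RCLike 𝕜] {V : Type*} (par : V → Option V) (hTree : IsDirectedTree par)
    (hLeafless : Leafless par)
    -- generations, enumerated with respect to a fixed vertex in generation 0
    (gen : V → ℤ) (hgen : ∀ u v : V, par v = some u → gen v = gen u + 1)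
    (hgen0 : ∃ v₀ : V, gen v₀ = 0) (hgenroot : ∀ r : V, IsRoot par r → gen r = 0)
    -- the tree is symmetric and locally finite, with `γ_n` children in generation `n`
    (γ : ℤ → ℕ) (hfin : ∀ v : V, (children par v).Finite)
    (hγ : ∀ v : V, (children par v).ncard = γ (gen v))
    -- the weight is symmetric, with value `Λ n` on generation `n`
    (Λ : ℤ → 𝕜) (hΛ : ∀ n : ℤ, Λ n ≠ 0) (lam : V → 𝕜) (hlam : ∀ v : V, lam v = Λ (gen v))
    {X : Type*} [NormedAddCommGroup X] [NormedSpace 𝕜 X] [CompleteSpace X]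
    (ι : X →ₗ[𝕜] V → 𝕜) (p : ℝ) (T : X →L[𝕜] X) (hT : IsShiftRep par lam ι T) :
    -- the case `X = ℓ^p(V)`, `1 < p < ∞`
    ((1 < p ∧ IsLpSpaceRep ι (fun _ : V => (1 : 𝕜)) p) →
      ((Rooted par ∨ (Unrooted par ∧ ¬ HasFreeLeftEnd par)) →
        (ChaoticOp T ↔
          (∑' n : ℕ, (gamProd γ (n + 1) ^ (p / conjExp p) * lamProdPos Λ (n + 1) ^ p)⁻¹)
            < ⊤)) ∧
      ((Unrooted par ∧ HasFreeLeftEnd par) →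
        (ChaoticOp T ↔
          ((∑' n : ℕ, (gamProd γ (n + 1) ^ (p / conjExp p) * lamProdPos Λ (n + 1) ^ p)⁻¹)
              < ⊤ ∧
            (∑' n : ℕ, lamProdNeg Λ (n + 1) ^ p) < ⊤)))) ∧
    -- the case `X = c₀(V)`
    (IsC0SpaceRep ι (fun _ : V => (1 : 𝕜)) →
      ((Rooted par ∨ (Unrooted par ∧ ¬ HasFreeLeftEnd par)) →
        (ChaoticOp T ↔
          Tendsto (fun n : ℕ => gamProd γ n * lamProdPos Λ n) atTop (𝓝 ⊤))) ∧
      ((Unrooted par ∧ HasFreeLeftEnd par) →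
        (ChaoticOp T ↔
          (Tendsto (fun n : ℕ => gamProd γ n * lamProdPos Λ n) atTop (𝓝 ⊤) ∧
            Tendsto (fun n : ℕ => lamProdNeg Λ n) atTop (𝓝 0))))) := by
  obtain ⟨v₀, hv₀⟩ := hgen0
  have hS : IsSymmetricTree par gen γ :=
    { hTree with
      leafless := hLeafless
      gen_of_par := hgen _ _
      finite_children := hfin
      ncard_children := hγ }
  have hshift : IsSymmetricShift hS Λ ι T := hT.isSymmetricShift hS hlam
  refine ⟨fun ⟨hp, hX⟩ => ?_, fun hX => ?_⟩
  · have hp₀ : 0 < p := one_pos.trans hp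
    have hι := hX.isAveragingSpace hp
    rw [← hX.levelFun_mem_range_iff hp₀ hS hΛ hv₀]
    refine ⟨fun hcase => ?_, fun ⟨hunrooted, hfree⟩ => ?_⟩
    · exact hshift.chaoticOp_iff_levelFun_mem_range hι hΛ (hcase.imp_right And.right) v₀
    · rw [← hX.ancestorFun_mem_range_iff hp₀ hTree hunrooted Λ hv₀]
      exact hshift.chaoticOp_iff_of_hasFreeLeftEnd hι hΛ hfree v₀
  · have hι := hX.isAveragingSpace
    rw [← hX.levelFun_mem_range_iff hS hΛ hv₀]
    refine ⟨fun hcase => ?_, fun ⟨hunrooted, hfree⟩ => ?_⟩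
    · exact hshift.chaoticOp_iff_levelFun_mem_range hι hΛ (hcase.imp_right And.right) v₀
    · rw [← hX.ancestorFun_mem_range_iff hTree hunrooted Λ hv₀]
      exact hshift.chaoticOp_iff_of_hasFreeLeftEnd hι hΛ hfree v₀

end PaperTree
end
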